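/- arXiv:1506.06200 — 2 statements merged into one kernel-verified Lean document; each statement's English description precedes it below -/
import Mathlib

section
/- Let k be a convenient field and let χ be a nonzero element of K_0[V_k] with L·χ = 0. Then there exist varieties X and Y over k such that χ = [X] − [Y], [X × 𝔸¹] = [Y × 𝔸¹] in K_0[V_k], and X × 𝔸¹ and Y × 𝔸¹ are not piecewise isomorphic. -/
open AlgebraicGeometry CategoryTheory CategoryTheory.Limits

noncomputable section

universe u

/-- A variety over a field `k`: a reduced separated scheme of finite type over `Spec k`. -/
structure Variety (k : Type u) [Field k] : Type (u + 1) where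
  /-- the underlying scheme -/
  toScheme : Scheme.{u}
  /-- the structure morphism to `Spec k` -/
  str : toScheme ⟶ Spec (CommRingCat.of k)
  reduced : IsReduced toScheme
  separated : IsSeparated str
  locallyOfFiniteType : LocallyOfFiniteType str
  quasiCompact : QuasiCompact str

namespace Variety

variable {k : Type u} [Field k]

/-- The dimension of a variety, i.e. the Krull dimension of its underlying space. -/
def dim (V : Variety k) : WithBot ℕ∞ := topologicalKrullDim V.toScheme

/-- `W` together with (implicitly) its two projections is a product of `X` and `Y`
over `k`, i.e. `W ≅ X ×ₖ Y`. -/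
def IsProductOf (W X Y : Variety k) : Prop :=
  ∃ e : W.toScheme ≅ Limits.pullback X.str Y.str,
    e.hom ≫ Limits.pullback.fst X.str Y.str ≫ X.str = W.str

/-- `A` is the affine line `𝔸¹` over `k`. -/
def IsAffLine (A : Variety k) : Prop :=
  ∃ e : A.toScheme ≅ Spec (CommRingCat.of (Polynomial k)),
    e.hom ≫ Spec.map (CommRingCat.ofHom (algebraMap k (Polynomial k))) = A.str

/-- `A` is affine `r`-space `𝔸^r` over `k`. -/
def IsAffSpace (r : ℕ) (A : Variety k) : Prop :=
  ∃ e : A.toScheme ≅ Spec (CommRingCat.of (MvPolynomial (Fin r) k)),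
    e.hom ≫ Spec.map (CommRingCat.ofHom (algebraMap k (MvPolynomial (Fin r) k))) = A.str

/-- A variety is smooth if its structure morphism is smooth. -/
def IsSmoothVar (V : Variety k) : Prop := IsSmooth V.str

/-- Projective `N`-space over `k`, as the `Proj` of a polynomial ring. -/
def ProjSpace (k : Type u) [Field k] (N : ℕ) : Scheme.{u} :=
  letI := MvPolynomial.gradedAlgebra (σ := Fin (N + 1)) (R := k)
  Proj (MvPolynomial.homogeneousSubmodule (Fin (N + 1)) k)

/-- The structure morphism of projective `N`-space over `k`. -/
def ProjSpace.str (k : Type u) [Field k] (N : ℕ) :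
    ProjSpace k N ⟶ Spec (CommRingCat.of k) :=
  letI := MvPolynomial.gradedAlgebra (σ := Fin (N + 1)) (R := k)
  Proj.toSpecZero (MvPolynomial.homogeneousSubmodule (Fin (N + 1)) k) ≫
    Spec.map (CommRingCat.ofHom
      (algebraMap k (MvPolynomial.homogeneousSubmodule (Fin (N + 1)) k 0)))

/-- `P` is projective `N`-space over `k`, as a variety. -/
def IsProjSpaceVar (N : ℕ) (P : Variety k) : Prop :=
  ∃ e : P.toScheme ≅ ProjSpace k N, e.hom ≫ ProjSpace.str k N = P.str

/-- A variety is projective if it admits a closed immersion into some `ℙ^N` over `k`. -/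
def IsProjectiveVar (V : Variety k) : Prop :=
  ∃ (N : ℕ) (i : V.toScheme ⟶ ProjSpace k N),
    IsClosedImmersion i ∧ i ≫ ProjSpace.str k N = V.str

/-- `X` and `Y` are birationally isomorphic over `k`:
some dense open subvarieties are isomorphic over `k`. -/
def BirEquiv (X Y : Variety k) : Prop :=
  ∃ (U : X.toScheme.Opens) (V : Y.toScheme.Opens),
    Dense (U : Set X.toScheme) ∧ Dense (V : Set Y.toScheme) ∧
    ∃ e : U.toScheme ≅ V.toScheme, e.hom ≫ V.ι ≫ Y.str = U.ι ≫ X.str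

/-- `X` and `Y` are stably birational: `X × 𝔸^r` and `Y × 𝔸^r` are birationally
isomorphic for some `r ≥ 0`. -/
def StablyBirational (X Y : Variety k) : Prop :=
  ∃ (r : ℕ) (A XA YA : Variety k),
    IsAffSpace r A ∧ IsProductOf XA X A ∧ IsProductOf YA Y A ∧ BirEquiv XA YA

/-- `X` and `Y` are piecewise isomorphic: they admit finite partitions into locally
closed subvarieties which are isomorphic over `k` piece by piece. -/
def PiecewiseIso (X Y : Variety k) : Prop :=
  ∃ (m : ℕ) (P Q : Fin m → Variety k)
    (f : ∀ i, (P i).toScheme ⟶ X.toScheme) (g : ∀ i, (Q i).toScheme ⟶ Y.toScheme),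
    (∀ i, IsImmersion (f i)) ∧ (∀ i, IsImmersion (g i)) ∧
    (∀ i, f i ≫ X.str = (P i).str) ∧ (∀ i, g i ≫ Y.str = (Q i).str) ∧
    (∀ i j, i ≠ j → Disjoint (Set.range (f i).base) (Set.range (f j).base)) ∧
    (∀ i j, i ≠ j → Disjoint (Set.range (g i).base) (Set.range (g j).base)) ∧
    (⋃ i, Set.range (f i).base) = Set.univ ∧
    (⋃ i, Set.range (g i).base) = Set.univ ∧
    ∀ i, ∃ e : (P i).toScheme ≅ (Q i).toScheme, e.hom ≫ (Q i).str = (P i).str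

/-- The set of generators of the scissor-type relations among varieties of the class `P`:
`[X] = [X']` for `X ≅ X'` over `k`, and `[X] = [Y] + [U]` whenever `Y` is a closed
subvariety of `X` and `U` is its open complement. -/
def cutRel (P : Variety k → Prop) : Set (FreeAbelianGroup {V : Variety k // P V}) :=
  {a | (∃ X Y : {V : Variety k // P V},
          (∃ e : X.1.toScheme ≅ Y.1.toScheme, e.hom ≫ Y.1.str = X.1.str) ∧
          a = FreeAbelianGroup.of X - FreeAbelianGroup.of Y) ∨
       (∃ (X Y U : {V : Variety k // P V}) (i : Y.1.toScheme ⟶ X.1.toScheme)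
          (j : U.1.toScheme ⟶ X.1.toScheme),
          IsClosedImmersion i ∧ IsOpenImmersion j ∧
          i ≫ X.1.str = Y.1.str ∧ j ≫ X.1.str = U.1.str ∧
          Set.range j.base = (Set.range i.base)ᶜ ∧
          a = FreeAbelianGroup.of X - FreeAbelianGroup.of Y - FreeAbelianGroup.of U)}

/-- The Grothendieck group of the class of varieties satisfying `P`: the free abelian
group on (isomorphism classes of) varieties satisfying `P`, modulo the relations
`[X] = [Y] + [X ∖ Y]` for closed subvarieties `Y` of `X`. -/
def K0 (k : Type u) [Field k] (P : Variety k → Prop) : Type (u + 1) :=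
  FreeAbelianGroup {V : Variety k // P V} ⧸ AddSubgroup.closure (cutRel P)

instance (P : Variety k → Prop) : AddCommGroup (K0 k P) :=
  QuotientAddGroup.Quotient.addCommGroup _

/-- The class of a variety in the Grothendieck group. -/
def K0.cls {P : Variety k → Prop} (V : Variety k) (hV : P V) : K0 k P :=
  QuotientAddGroup.mk (FreeAbelianGroup.of ⟨V, hV⟩)

/-- `K_0(V_k^{(n)})`: the Grothendieck group of varieties of dimension at most `n`. -/
abbrev K0le (k : Type u) [Field k] (n : ℕ) : Type (u + 1) :=
  K0 k (fun V => V.dim ≤ (n : WithBot ℕ∞))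

/-- `K_0[V_k]` (as an abelian group): the Grothendieck group of all varieties over `k`. -/
abbrev K0Var (k : Type u) [Field k] : Type (u + 1) := K0 k (fun _ => True)

/-- The class of a variety in `K_0[V_k]`. -/
def K0Var.cls (V : Variety k) : K0Var k := K0.cls V trivial

/-- `K_0(V_k^{(n,n-1)})`: the Grothendieck group of varieties of dimension at most `n`,
where moreover the class of every variety of dimension `< n` is set to `0`. -/
def K0graded (k : Type u) [Field k] (n : ℕ) : Type (u + 1) :=
  FreeAbelianGroup {V : Variety k // V.dim ≤ (n : WithBot ℕ∞)} ⧸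
    AddSubgroup.closure (cutRel (fun V => V.dim ≤ (n : WithBot ℕ∞)) ∪
      {a | ∃ X : {V : Variety k // V.dim ≤ (n : WithBot ℕ∞)},
        X.1.dim < (n : WithBot ℕ∞) ∧ a = FreeAbelianGroup.of X})

instance (n : ℕ) : AddCommGroup (K0graded k n) :=
  QuotientAddGroup.Quotient.addCommGroup _

/-- The class of a variety in `K_0(V_k^{(n,n-1)})`. -/
def K0graded.cls (n : ℕ) (V : Variety k) (hV : V.dim ≤ (n : WithBot ℕ∞)) : K0graded k n :=
  QuotientAddGroup.mk (FreeAbelianGroup.of ⟨V, hV⟩)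

/-- `x ∈ K_0(V_k^{(b)})` lies in the image of multiplication by `L = [𝔸¹]`, viewed as the
map `K_0(V_k^{(a)}) → K_0(V_k^{(b)})` sending `[Z]` to `[Z × 𝔸¹]`. -/
def InMulLImage (a b : ℕ) (x : K0le k b) : Prop :=
  ∃ (m : ℕ) (c : Fin m → ℤ) (Z W : Fin m → Variety k)
    (_ : ∀ i, (Z i).dim ≤ (a : WithBot ℕ∞)) (hW : ∀ i, (W i).dim ≤ (b : WithBot ℕ∞)),
    (∀ i, ∃ A : Variety k, IsAffLine A ∧ IsProductOf (W i) (Z i) A) ∧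
    x = ∑ i, c i • K0.cls (W i) (hW i)

/-- `L · χ = 0` in `K_0[V_k]`: there is a representation `χ = ∑ cᵢ [Zᵢ]` with
`∑ cᵢ [Zᵢ × 𝔸¹] = 0`. -/
def MulLZero (χ : K0Var k) : Prop :=
  ∃ (m : ℕ) (c : Fin m → ℤ) (Z W : Fin m → Variety k),
    (∀ i, ∃ A : Variety k, IsAffLine A ∧ IsProductOf (W i) (Z i) A) ∧
    χ = ∑ i, c i • K0Var.cls (Z i) ∧
    (0 : K0Var k) = ∑ i, c i • K0Var.cls (W i)

/-- The subgroup of `K_0[V_k]` of multiples of `L`, i.e. the ideal generated by `L`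
viewed as an additive subgroup. -/
def LMultiples (k : Type u) [Field k] : AddSubgroup (K0Var k) :=
  AddSubgroup.closure
    {y | ∃ (m : ℕ) (c : Fin m → ℤ) (Z W : Fin m → Variety k),
      (∀ i, ∃ A : Variety k, IsAffLine A ∧ IsProductOf (W i) (Z i) A) ∧
      y = ∑ i, c i • K0Var.cls (W i)}

/-- `Z` realizes the closed complement `X ∖ U` of the open `U ⊆ X` as a variety. -/
def IsComplementOf (Z X : Variety k) (U : X.toScheme.Opens) : Prop :=
  ∃ i : Z.toScheme ⟶ X.toScheme, IsClosedImmersion i ∧ i ≫ X.str = Z.str ∧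
    Set.range i.base = (U : Set X.toScheme)ᶜ

/-- The birational isomorphism between `n`-dimensional varieties `X ⇢ Y` represented by
an isomorphism `U → V` of open subvarieties is convenient:
`[X ∖ U] - [Y ∖ V]` lies in the image of `·L : K_0(V_k^{(n-2)}) → K_0(V_k^{(n-1)})`. -/
def ConvenientRep (n : ℕ) (X Y : Variety k) (U : X.toScheme.Opens)
    (V : Y.toScheme.Opens) : Prop :=
  ∀ (ZX ZY : Variety k) (hZX : ZX.dim ≤ ((n - 1 : ℕ) : WithBot ℕ∞))
    (hZY : ZY.dim ≤ ((n - 1 : ℕ) : WithBot ℕ∞)),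
    IsComplementOf ZX X U → IsComplementOf ZY Y V →
    InMulLImage (n - 2) (n - 1) (K0.cls ZX hZX - K0.cls ZY hZY)

/-- A field `k` is convenient if every birational isomorphism between smooth projective
varieties over `k` is convenient. -/
def ConvenientField (k : Type u) [Field k] : Prop :=
  ∀ (n : ℕ) (X Y : Variety k), IsSmoothVar X → IsSmoothVar Y →
    IsProjectiveVar X → IsProjectiveVar Y →
    IrreducibleSpace X.toScheme → IrreducibleSpace Y.toScheme →
    X.dim = (n : WithBot ℕ∞) → Y.dim = (n : WithBot ℕ∞) →
    ∀ (U : X.toScheme.Opens) (V : Y.toScheme.Opens),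
      Dense (U : Set X.toScheme) → Dense (V : Set Y.toScheme) →
      ∀ e : U.toScheme ≅ V.toScheme, e.hom ≫ V.ι ≫ Y.str = U.ι ≫ X.str →
      ConvenientRep n X Y U V

end Variety
namespace Variety

variable {k : Type u} [Field k]

/-- The type of birational isomorphism classes of irreducible `n`-dimensional
varieties over `k` (the set `B_n`). -/
def BirClass (k : Type u) [Field k] (n : ℕ) : Type (u + 1) :=
  Quot (fun X Y : {V : Variety k // IrreducibleSpace V.toScheme ∧
    V.dim = (n : WithBot ℕ∞)} => BirEquiv X.1 Y.1)

/-- The type of stable birational isomorphism classes of irreducible varieties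
over `k` (the set `SB`). -/
def StableBirClass (k : Type u) [Field k] : Type (u + 1) :=
  Quot (fun X Y : {V : Variety k // IrreducibleSpace V.toScheme} =>
    StablyBirational X.1 Y.1)

/-- The family of varieties `C` together with the closed immersions `f i` realizes
exactly the `n`-dimensional irreducible components of `X`, each exactly once. -/
def RealizesComponents (n : ℕ) (X : Variety k) (m : ℕ)
    (C : Fin m → Variety k) (f : ∀ i, (C i).toScheme ⟶ X.toScheme) : Prop :=
  (∀ i, IsClosedImmersion (f i)) ∧ (∀ i, f i ≫ X.str = (C i).str) ∧
  Function.Injective (fun i => Set.range (f i).base) ∧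
  (Set.range fun i => Set.range (f i).base) =
    {S | S ∈ irreducibleComponents X.toScheme ∧
      topologicalKrullDim S = (n : WithBot ℕ∞)}

/-- `p : E ⟶ Z` is a Zariski-locally trivial `ℙ^ℓ`-bundle: every point of `Z` has an
open neighbourhood `W` such that `p⁻¹(W)` is isomorphic over `W` to `W × ℙ^ℓ`. -/
def IsProjBundle (ℓ : ℕ) {E Z : Variety k} (p : E.toScheme ⟶ Z.toScheme) : Prop :=
  ∀ z : Z.toScheme, ∃ W : Z.toScheme.Opens, z ∈ W ∧
    ∃ e : (p ⁻¹ᵁ W).toScheme ≅ Limits.pullback (W.ι ≫ Z.str) (ProjSpace.str k ℓ),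
      e.hom ≫ Limits.pullback.fst (W.ι ≫ Z.str) (ProjSpace.str k ℓ) = p ∣_ W

/-- `X` (of dimension `d`) has stable dimensional complexity `m`: `m` is the minimal
integer such that `X` is stably birational to `X' × 𝔸^(d-m)` for some variety `X'` of
dimension `m`. -/
def HasStableDimComplexity (X : Variety k) (d m : ℕ) : Prop :=
  (∃ X' A P : Variety k, X'.dim = (m : WithBot ℕ∞) ∧ IsAffSpace (d - m) A ∧
      IsProductOf P X' A ∧ StablyBirational X P) ∧
  ∀ j < m, ¬ ∃ X' A P : Variety k, X'.dim = (j : WithBot ℕ∞) ∧ IsAffSpace (d - j) A ∧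
      IsProductOf P X' A ∧ StablyBirational X P

/-- Generators of the covering relations among smooth varieties: `[X] = ∑ᵢ [Xᵢ]`
whenever `{Xᵢ → X}` is a finite family of locally closed embeddings of smooth
varieties with pairwise disjoint images whose union is all of `X`. -/
def smCutRel (k : Type u) [Field k] :
    Set (FreeAbelianGroup {V : Variety k // IsSmoothVar V}) :=
  {a | ∃ (X : {V : Variety k // IsSmoothVar V}) (m : ℕ)
        (P : Fin m → {V : Variety k // IsSmoothVar V})
        (f : ∀ i, (P i).1.toScheme ⟶ X.1.toScheme),
        (∀ i, IsImmersion (f i)) ∧ (∀ i, f i ≫ X.1.str = (P i).1.str) ∧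
        (∀ i j, i ≠ j → Disjoint (Set.range (f i).base) (Set.range (f j).base)) ∧
        (⋃ i, Set.range (f i).base) = Set.univ ∧
        a = FreeAbelianGroup.of X - ∑ i, FreeAbelianGroup.of (P i)}

/-- `K_0(V_k^{sm})`: the Grothendieck group of smooth varieties over `k`, with the
covering relations. -/
def K0sm (k : Type u) [Field k] : Type (u + 1) :=
  FreeAbelianGroup {V : Variety k // IsSmoothVar V} ⧸ AddSubgroup.closure (smCutRel k)

instance : AddCommGroup (K0sm k) := QuotientAddGroup.Quotient.addCommGroup _

/-- The class of a smooth variety in `K_0(V_k^{sm})`. -/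
def K0sm.cls (V : Variety k) (hV : IsSmoothVar V) : K0sm k :=
  QuotientAddGroup.mk (FreeAbelianGroup.of ⟨V, hV⟩)

end Variety
namespace Variety

variable {k : Type u} [Field k]

/-- The class of a variety in `K_0(V_k^{(n)})`. -/
def K0le.cls (n : ℕ) (V : Variety k) (hV : V.dim ≤ (n : WithBot ℕ∞)) : K0le k n :=
  K0.cls V hV

end Variety

open Variety

/-!
Differences of pairs `([V], [V × 𝔸¹])` form a group, because disjoint unions add such pairs; so a
class killed by `L` is `[X] - [Y]` with `[X × 𝔸¹] = [Y × 𝔸¹]`. Adding to `X` and `Y` the zero loci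
of `a` and `b`, where `a` and `b` are functions on one affine variety with isomorphic complements
`D(a) ≃ D(b)`, preserves both equalities. It remains to choose `a` and `b` such that the cylinders
over the two zero loci are not piecewise isomorphic, even after adding `X × 𝔸¹` and `Y × 𝔸¹`.

Let `p` and `q` be distinct primes. Expand the product of the virtual `(ℤ/pq)²`-sets
`p • pt + (ℤ/p)² - ∑ (ℤ/p)²/ℓ` (sum over the lines `ℓ`) for `p` and for `q`. Because `p²` and `q²`
are coprime, its positive and its negative terms have isomorphic permutation lattices over `ℤ`,
although only the positive ones contain a fixed point. By Kummer descent along adjoining `n`-th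
roots of `xⁿ - 1` and `xⁿ - ζ` with `n = pq`, these lattices are the character lattices of
isomorphic tori, and the tori are complements of norm hypersurfaces in affine spaces of the same
dimension over a punctured line. The fixed point makes a component of the first hypersurface
rational, so its cylinder has a point whose residue field embeds into a purely transcendental
extension `Ξ` with large transcendence degree. On the second hypersurface such a point would put a
`p`-th or `q`-th root of `xⁿ - 1` or of `(xⁿ - ζ) (xⁿ - 1)ʲ` into `Ξ`, with `x` transcendental,
which Fermat's last theorem for polynomials and its generalizations exclude. Points of large degree
are preserved by piecewise isomorphism, and a degree above the dimension of `Y × 𝔸¹` tells the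
cylinders apart.
-/

namespace LefschetzKernel

/-! ### Two permutation lattices that are isomorphic over `ℤ` -/

section

/-- A set with two permutations, indexed by `Bool`: the data by which two commuting generators of
a Galois group act on a set of coordinates. -/
class PermPair (P : Type) where
  /-- the two permutations -/
  act : Bool → Equiv.Perm P

open PermPair Kronecker

section PermPair

variable {P Q P' Q' : Type} [PermPair P] [PermPair Q] [PermPair P'] [PermPair Q']

instance : PermPair (P ⊕ Q) := ⟨fun s ↦ Equiv.sumCongr (act s) (act s)⟩

instance : PermPair (P × Q) := ⟨fun s ↦ Equiv.prodCongr (act s) (act s)⟩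

@[simp]
lemma act_inl (s : Bool) (x : P) : act s (Sum.inl x : P ⊕ Q) = Sum.inl (act s x) := rfl

@[simp]
lemma act_inr (s : Bool) (y : Q) : act s (Sum.inr y : P ⊕ Q) = Sum.inr (act s y) := rfl

@[simp]
lemma act_mk (s : Bool) (x : P) (y : Q) : act s (x, y) = (act s x, act s y) := rfl

/-- An integer matrix indexed by two sets with permutations is equivariant if it is the matrix of
an equivariant homomorphism of permutation lattices. -/
def IsEquivariant (M : Matrix P Q ℤ) : Prop :=
  ∀ (s : Bool) (x : P) (y : Q), M (act s x) (act s y) = M x y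

namespace IsEquivariant

lemma one [DecidableEq P] : IsEquivariant (1 : Matrix P P ℤ) := fun s x y ↦ by
  simp [Matrix.one_apply]

lemma smul {M : Matrix P Q ℤ} (hM : IsEquivariant M) (a : ℤ) : IsEquivariant (a • M) :=
  fun s x y ↦ by simp [hM s]

lemma neg {M : Matrix P Q ℤ} (hM : IsEquivariant M) : IsEquivariant (-M) :=
  fun s x y ↦ by simp [hM s]

lemma kronecker {M : Matrix P Q ℤ} {N : Matrix P' Q' ℤ} (hM : IsEquivariant M)
    (hN : IsEquivariant N) : IsEquivariant (M ⊗ₖ N) := by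
  rintro s ⟨x, x'⟩ ⟨y, y'⟩
  simp only [act_mk, Matrix.kroneckerMap_apply, hM s, hN s]

lemma fromRows {M : Matrix P Q ℤ} {N : Matrix P' Q ℤ} (hM : IsEquivariant M)
    (hN : IsEquivariant N) : IsEquivariant (Matrix.fromRows M N) := by
  rintro s (x | x) y <;> simp [hM s, hN s]

lemma fromCols {M : Matrix P Q ℤ} {N : Matrix P Q' ℤ} (hM : IsEquivariant M)
    (hN : IsEquivariant N) : IsEquivariant (Matrix.fromCols M N) := by
  rintro s x (y | y) <;> simp [hM s, hN s]

lemma fromBlocks {A : Matrix P Q ℤ} {B : Matrix P Q' ℤ} {C : Matrix P' Q ℤ} {D : Matrix P' Q' ℤ}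
    (hA : IsEquivariant A) (hB : IsEquivariant B) (hC : IsEquivariant C) (hD : IsEquivariant D) :
    IsEquivariant (Matrix.fromBlocks A B C D) := by
  rintro s (x | x) (y | y) <;> simp [hA s, hB s, hC s, hD s]

end IsEquivariant

end PermPair

/-- The set `ZMod p` with trivial permutations. -/
def TrivialSet (p : ℕ) : Type := ZMod p

/-- The group `(ℤ/p)²` acting on itself by translation. -/
def RegularSet (p : ℕ) : Type := ZMod p × ZMod p

/-- The disjoint union of the quotients of `(ℤ/p)²` by its `p + 1` lines. The second component
names the line, as the kernel of the corresponding `lineForm`; the first is the value of that linear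
form. -/
def LineQuotients (p : ℕ) : Type := ZMod p × Option (ZMod p)

/-- The disjoint union of `p` fixed points and of the regular set. -/
abbrev TrivialSumRegular (p : ℕ) : Type := TrivialSet p ⊕ RegularSet p

/-- The residue class labelling a point of `TrivialSet p`. -/
def TrivialSet.toZMod {p : ℕ} (t : TrivialSet p) : ZMod p := t

/-- The value of the linear form on the coset `b` of a line. -/
def LineQuotients.value {p : ℕ} (b : LineQuotients p) : ZMod p := b.1

/-- The name of the line of which `b` is a coset. -/
def LineQuotients.line {p : ℕ} (b : LineQuotients p) : Option (ZMod p) := b.2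

instance (p : ℕ) [NeZero p] : Fintype (TrivialSet p) := inferInstanceAs (Fintype (ZMod p))

instance (p : ℕ) : DecidableEq (TrivialSet p) := inferInstanceAs (DecidableEq (ZMod p))

instance (p : ℕ) [NeZero p] : Fintype (RegularSet p) :=
  inferInstanceAs (Fintype (ZMod p × ZMod p))

instance (p : ℕ) : DecidableEq (RegularSet p) := inferInstanceAs (DecidableEq (ZMod p × ZMod p))

instance (p : ℕ) : AddCommGroup (RegularSet p) := inferInstanceAs (AddCommGroup (ZMod p × ZMod p))

instance (p : ℕ) [NeZero p] : Fintype (LineQuotients p) :=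
  inferInstanceAs (Fintype (ZMod p × Option (ZMod p)))

instance (p : ℕ) : DecidableEq (LineQuotients p) :=
  inferInstanceAs (DecidableEq (ZMod p × Option (ZMod p)))

/-- The standard basis of `(ℤ/p)²`. -/
def basisVec (p : ℕ) : Bool → RegularSet p
  | false => (1, 0)
  | true => (0, 1)

/-- Linear forms on `(ℤ/p)²` representing the `p + 1` lines of the dual plane. -/
def lineForm {p : ℕ} : Option (ZMod p) → RegularSet p → ZMod p
  | none, v => v.1
  | some s, v => v.2 - s * v.1

lemma lineForm_add {p : ℕ} (l : Option (ZMod p)) (v w : RegularSet p) :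
    lineForm l (v + w) = lineForm l v + lineForm l w := by
  cases l with
  | none => rfl
  | some s =>
    change (v.2 + w.2) - s * (v.1 + w.1) = (v.2 - s * v.1) + (w.2 - s * w.1)
    ring

instance (p : ℕ) : PermPair (TrivialSet p) := ⟨fun _ ↦ 1⟩

instance (p : ℕ) : PermPair (RegularSet p) := ⟨fun s ↦ Equiv.addRight (basisVec p s)⟩

instance (p : ℕ) : PermPair (LineQuotients p) where
  act s :=
    { toFun b := (b.1 + lineForm b.2 (basisVec p s), b.2)
      invFun b := (b.1 - lineForm b.2 (basisVec p s), b.2)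
      left_inv _ := Prod.ext (add_sub_cancel_right _ _) rfl
      right_inv _ := Prod.ext (sub_add_cancel _ _) rfl }

/-- The homomorphism `ℤ[TrivialSumRegular p] → ℤ[LineQuotients p]` which is the sum of all
projections on the regular set and sends the fixed point `t` to the sum of all points of the
quotient indexed by `some t`. -/
def quotientMatrix (p : ℕ) : Matrix (LineQuotients p) (TrivialSumRegular p) ℤ :=
  Matrix.fromCols (.of fun b t ↦ if b.line = some t.toZMod then 1 else 0)
    (.of fun b v ↦ if lineForm b.line v = b.value then 1 else 0)

/-- The homomorphism `ℤ[LineQuotients p] → ℤ[TrivialSumRegular p]` inverse to `quotientMatrix p` up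
to the factor `p ^ 2`. -/
def transferMatrix (p : ℕ) : Matrix (TrivialSumRegular p) (LineQuotients p) ℤ :=
  Matrix.fromRows
    (.of fun t b ↦
      p * (if b.line = some t.toZMod then 1 else 0) - p * (if b.line = none then 1 else 0))
    (.of fun v b ↦
      p * (if lineForm b.line v = b.value then 1 else 0) - (if b.line = none then 0 else 1))

lemma lineForm_act_eq_iff {p : ℕ} (s : Bool) (v : RegularSet p) (b : LineQuotients p) :
    lineForm (act s b).line (act s v) = (act s b).value ↔ lineForm b.line v = b.value := by
  change lineForm b.line (v + basisVec p s) = b.value + lineForm b.line (basisVec p s) ↔ _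
  rw [lineForm_add, add_left_inj]

lemma isEquivariant_quotientMatrix (p : ℕ) : IsEquivariant (quotientMatrix p) :=
  .fromCols (fun _ _ _ ↦ rfl) (fun s b v ↦ if_congr (lineForm_act_eq_iff s v b) rfl rfl)

lemma isEquivariant_transferMatrix (p : ℕ) : IsEquivariant (transferMatrix p) :=
  .fromRows (fun _ _ _ ↦ rfl) fun s v b ↦ by
    simp only [Matrix.of_apply, lineForm_act_eq_iff]
    rfl

lemma sum_lineForm_eq (p : ℕ) [Fact p.Prime] (v w : RegularSet p) :
    ∑ l, (if lineForm l v = lineForm l w then (1 : ℤ) else 0) =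
      if v = w then (p : ℤ) + 1 else 1 := by
  split_ifs with h
  · simp [h, ZMod.card]
  obtain ⟨v₁, v₂⟩ := v
  obtain ⟨w₁, w₂⟩ := w
  rw [Fintype.sum_option]
  simp only [lineForm]
  by_cases h₁ : v₁ = w₁
  · subst h₁
    have h₂ : v₂ ≠ w₂ := fun h₂ ↦ h (h₂ ▸ rfl)
    simp [h₂]
  · have slope (s : ZMod p) :
        v₂ - s * v₁ = w₂ - s * w₁ ↔ s = (v₂ - w₂) / (v₁ - w₁) := by
      rw [eq_div_iff (sub_ne_zero.mpr h₁)]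
      grind
    simp [slope, h₁]

lemma sum_lineQuotients {p : ℕ} [NeZero p] (f : Option (ZMod p) → ZMod p → ℤ) :
    ∑ b : LineQuotients p, f b.line b.value = ∑ l, ∑ c, f l c :=
  Fintype.sum_prod_type_right _

lemma transferMatrix_mul_quotientMatrix (p : ℕ) [Fact p.Prime] :
    transferMatrix p * quotientMatrix p = (p ^ 2 : ℤ) • 1 := by
  rw [transferMatrix, quotientMatrix, Matrix.fromRows_mul_fromCols, ← Matrix.fromBlocks_one,
    Matrix.fromBlocks_smul]
  congr 1
  · ext s t
    have toZMod_eq : t.toZMod = s.toZMod ↔ s = t := eq_comm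
    simp only [Matrix.mul_apply, Matrix.of_apply]
    rw [sum_lineQuotients fun l _ ↦
      (p * (if l = some s.toZMod then 1 else 0) - p * (if l = none then 1 else 0)) *
        (if l = some t.toZMod then 1 else 0)]
    simp [Matrix.one_apply, toZMod_eq, sq, ZMod.card]
  · ext s w
    simp only [Matrix.mul_apply, Matrix.of_apply]
    rw [sum_lineQuotients fun l c ↦
      (p * (if l = some s.toZMod then 1 else 0) - p * (if l = none then 1 else 0)) *
        (if lineForm l w = c then 1 else 0)]
    simp
  · ext v t
    simp only [Matrix.mul_apply, Matrix.of_apply]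
    rw [sum_lineQuotients fun l c ↦
      (p * (if lineForm l v = c then 1 else 0) - (if l = none then 0 else 1)) *
        (if l = some t.toZMod then 1 else 0)]
    simp [ZMod.card]
  · ext v w
    simp only [Matrix.mul_apply, Matrix.of_apply]
    rw [sum_lineQuotients fun l c ↦
      (p * (if lineForm l v = c then 1 else 0) - (if l = none then 0 else 1)) *
        (if lineForm l w = c then 1 else 0)]
    have collapse (l : Option (ZMod p)) :
        ∑ c, ((p : ℤ) * (if lineForm l v = c then 1 else 0) - (if l = none then 0 else 1)) *
            (if lineForm l w = c then 1 else 0) =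
          (p * (if lineForm l v = lineForm l w then 1 else 0) - if l = none then 0 else 1 : ℤ) := by
      simp only [mul_ite, mul_one, mul_zero, Finset.sum_ite_eq, Finset.mem_univ, if_true]
    have card_lines : ∑ l : Option (ZMod p), (if l = none then 0 else 1 : ℤ) = p := by
      simp [Fintype.sum_option, ZMod.card]
    simp only [collapse, Finset.sum_sub_distrib, ← Finset.mul_sum, sum_lineForm_eq, card_lines,
      Matrix.smul_apply, Matrix.one_apply, smul_eq_mul]
    split_ifs <;> ring

lemma map_intCast_smul_one {m : Type*} [DecidableEq m] (c : ℤ) :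
    (c • (1 : Matrix m m ℤ)).map (Int.castRingHom ℚ) = (c : ℚ) • 1 := by
  ext i j
  simp only [Matrix.map_apply, Matrix.smul_apply, Matrix.one_apply]
  split_ifs <;> simp

lemma mul_eq_smul_one_comm {m n : Type*} [Fintype m] [Fintype n] [DecidableEq m] [DecidableEq n]
    (hmn : Fintype.card m = Fintype.card n) {M : Matrix m n ℤ} {N : Matrix n m ℤ} {c : ℤ}
    (hc : c ≠ 0) (h : M * N = c • 1) : N * M = c • 1 := by
  have hc' : (c : ℚ) ≠ 0 := Int.cast_ne_zero.mpr hc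
  have one_sided : ((c : ℚ)⁻¹ • M.map (Int.castRingHom ℚ)) * N.map (Int.castRingHom ℚ) = 1 := by
    rw [Matrix.smul_mul, ← Matrix.map_mul, h, map_intCast_smul_one, inv_smul_smul₀ hc']
  rw [Matrix.mul_eq_one_comm_of_card_eq _ _ _ hmn, Matrix.mul_smul, inv_smul_eq_iff₀ hc',
    ← Matrix.map_mul, ← map_intCast_smul_one] at one_sided
  exact Matrix.map_injective (RingHom.injective_int _) one_sided

lemma card_trivialSumRegular (p : ℕ) [NeZero p] :
    Fintype.card (TrivialSumRegular p) = Fintype.card (LineQuotients p) := by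
  change Fintype.card (ZMod p ⊕ ZMod p × ZMod p) = Fintype.card (ZMod p × Option (ZMod p))
  simp only [Fintype.card_sum, Fintype.card_prod, Fintype.card_option]
  ring

lemma quotientMatrix_mul_transferMatrix (p : ℕ) [Fact p.Prime] :
    quotientMatrix p * transferMatrix p = (p ^ 2 : ℤ) • 1 :=
  mul_eq_smul_one_comm (card_trivialSumRegular p)
    (pow_ne_zero 2 (Nat.cast_ne_zero.mpr (Fact.out : p.Prime).ne_zero))
    (transferMatrix_mul_quotientMatrix p)

/-- The even part of the product of the virtual sets
`TrivialSumRegular p - LineQuotients p` and `TrivialSumRegular q - LineQuotients q`. -/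
abbrev EvenSet (p q : ℕ) : Type :=
  (TrivialSumRegular p × TrivialSumRegular q) ⊕ (LineQuotients p × LineQuotients q)

/-- The odd part of the product of the virtual sets
`TrivialSumRegular p - LineQuotients p` and `TrivialSumRegular q - LineQuotients q`. -/
abbrev OddSet (p q : ℕ) : Type :=
  (LineQuotients p × TrivialSumRegular q) ⊕ (TrivialSumRegular p × LineQuotients q)

lemma card_evenSet (p q : ℕ) [NeZero p] [NeZero q] :
    Fintype.card (EvenSet p q) = Fintype.card (OddSet p q) := by
  simp only [Fintype.card_sum (α := LineQuotients p × TrivialSumRegular q),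
    Fintype.card_sum (α := TrivialSumRegular p × TrivialSumRegular q), Fintype.card_prod,
    card_trivialSumRegular]

lemma le_card_evenSet (p q : ℕ) [NeZero p] [NeZero q] : p ≤ Fintype.card (EvenSet p q) := by
  let f (a : ZMod p) : EvenSet p q := .inr ((a, none), (0, none))
  have injective_f : Function.Injective f := fun a b h ↦
    congrArg (fun x : LineQuotients p × LineQuotients q ↦ x.1.1) (Sum.inr_injective h)
  exact (ZMod.card p).symm.le.trans (Fintype.card_le_of_injective f injective_f)

/-- The homomorphism `ℤ[EvenSet p q] → ℤ[OddSet p q]` which is an isomorphism when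
`a * p ^ 2 - b * q ^ 2 = 1`. -/
def exoticMatrix (p q : ℕ) (a b : ℤ) : Matrix (OddSet p q) (EvenSet p q) ℤ :=
  Matrix.fromBlocks (a • (quotientMatrix p ⊗ₖ 1)) (b • (1 ⊗ₖ transferMatrix q))
    (1 ⊗ₖ quotientMatrix q) (transferMatrix p ⊗ₖ 1)

/-- The inverse of `exoticMatrix p q a b` when `a * p ^ 2 - b * q ^ 2 = 1`. -/
def exoticMatrixInv (p q : ℕ) (a b : ℤ) : Matrix (EvenSet p q) (OddSet p q) ℤ :=
  Matrix.fromBlocks (transferMatrix p ⊗ₖ 1) ((-b) • (1 ⊗ₖ transferMatrix q))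
    (-(1 ⊗ₖ quotientMatrix q)) (a • (quotientMatrix p ⊗ₖ 1))

lemma isEquivariant_exoticMatrix (p q : ℕ) (a b : ℤ) : IsEquivariant (exoticMatrix p q a b) :=
  .fromBlocks (((isEquivariant_quotientMatrix p).kronecker .one).smul a)
    ((IsEquivariant.one.kronecker (isEquivariant_transferMatrix q)).smul b)
    (IsEquivariant.one.kronecker (isEquivariant_quotientMatrix q))
    ((isEquivariant_transferMatrix p).kronecker .one)

lemma isEquivariant_exoticMatrixInv (p q : ℕ) (a b : ℤ) :
    IsEquivariant (exoticMatrixInv p q a b) :=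
  .fromBlocks ((isEquivariant_transferMatrix p).kronecker .one)
    ((IsEquivariant.one.kronecker (isEquivariant_transferMatrix q)).smul (-b))
    (IsEquivariant.one.kronecker (isEquivariant_quotientMatrix q)).neg
    (((isEquivariant_quotientMatrix p).kronecker .one).smul a)

lemma exoticMatrix_mul_exoticMatrixInv (p q : ℕ) [Fact p.Prime] [Fact q.Prime] {a b : ℤ}
    (h : a * p ^ 2 - b * q ^ 2 = 1) : exoticMatrix p q a b * exoticMatrixInv p q a b = 1 := by
  rw [exoticMatrix, exoticMatrixInv, Matrix.fromBlocks_multiply]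
  refine Eq.trans ?_ Matrix.fromBlocks_one
  simp only [Matrix.smul_mul, Matrix.mul_smul, Matrix.mul_neg, ← Matrix.mul_kronecker_mul,
    quotientMatrix_mul_transferMatrix, transferMatrix_mul_quotientMatrix, Matrix.one_mul,
    Matrix.mul_one, Matrix.kronecker_smul, Matrix.smul_kronecker, Matrix.one_kronecker_one,
    smul_smul]
  congr 1
  · rw [← sub_eq_add_neg, ← sub_smul, h, one_smul]
  · rw [← add_smul, neg_mul, mul_comm b, neg_add_cancel, zero_smul]
  · exact add_neg_cancel _
  · rw [← add_smul, neg_mul, neg_add_eq_sub, h, one_smul]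

lemma exoticMatrixInv_mul_exoticMatrix (p q : ℕ) [Fact p.Prime] [Fact q.Prime] {a b : ℤ}
    (h : a * p ^ 2 - b * q ^ 2 = 1) : exoticMatrixInv p q a b * exoticMatrix p q a b = 1 := by
  rw [Matrix.mul_eq_one_comm_of_card_eq]
  · exact exoticMatrix_mul_exoticMatrixInv p q h
  · exact card_evenSet p q

end

/-! ### Kummer descent and tori attached to permutation lattices -/

section

open PermPair
open scoped TensorProduct

section Monomial

variable {G H : Type*} [CommGroup G] [CommGroup H] {l m n : Type*} [Fintype n]

/-- The monomial map with exponent matrix `M` on tuples of elements of a commutative group. -/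
def monomial (M : Matrix m n ℤ) (V : n → G) (i : m) : G := ∏ j, V j ^ M i j

lemma map_monomial (φ : G →* H) (M : Matrix m n ℤ) (V : n → G) (i : m) :
    φ (monomial M V i) = monomial M (fun j ↦ φ (V j)) i := by
  simp only [monomial, map_prod, map_zpow]

lemma prod_zpow_eq_zpow_sum {ι : Type*} (s : Finset ι) (f : ι → ℤ) (a : G) :
    ∏ i ∈ s, a ^ f i = a ^ ∑ i ∈ s, f i := by
  classical
  induction s using Finset.induction with
  | empty => simp
  | insert i s hi ih => rw [Finset.prod_insert hi, Finset.sum_insert hi, zpow_add, ih]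

lemma monomial_mul [Fintype m] (M : Matrix l m ℤ) (N : Matrix m n ℤ) (V : n → G) :
    monomial (M * N) V = monomial M (monomial N V) := by
  ext i
  simp only [monomial, Matrix.mul_apply, ← prod_zpow_eq_zpow_sum, ← Finset.prod_zpow, ← zpow_mul]
  rw [Finset.prod_comm]
  simp only [mul_comm]

@[simp]
lemma monomial_one [DecidableEq n] (V : n → G) : monomial 1 V = V := by
  ext i
  simp only [monomial, Matrix.one_apply, pow_ite, zpow_one, zpow_zero]
  simp

end Monomial

/-- Kummer-type descent data for an `R`-algebra `E`: two endomorphisms `σ s` of `E` and a basis of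
common eigenvectors such that, away from the basis vector `1`, some eigenvalue minus one is
invertible. This makes descent along `R → E` a statement about vectors fixed by both `σ s`. -/
structure DescentDatum (R E : Type u) [CommRing R] [CommRing E] [Algebra R E] where
  /-- the two endomorphisms -/
  σ : Bool → E →ₐ[R] E
  /-- the index set of the eigenbasis -/
  ι : Type
  /-- the eigenbasis -/
  basis : Module.Basis ι R E
  /-- the index of the basis vector `1` -/
  base : ι
  basis_base : basis base = 1
  /-- the eigenvalues -/
  eigenvalue : Bool → ι → R
  σ_basis (s : Bool) (i : ι) : σ s (basis i) = eigenvalue s i • basis i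
  exists_isUnit_eigenvalue_sub_one (i : ι) (hi : i ≠ base) : ∃ s, IsUnit (eigenvalue s i - 1)

section

variable {R E : Type u} [CommRing R] [CommRing E] [Algebra R E]
variable {S T : Type u} [CommRing S] [CommRing T] [Algebra R S] [Algebra R T]

namespace DescentDatum

variable (K : DescentDatum R E)

/-- The `S`-linear extension of `K.σ s` to `S ⊗ E`. -/
def baseChange (S : Type u) [CommRing S] [Algebra R S] (s : Bool) : S ⊗[R] E →ₐ[S] S ⊗[R] E :=
  Algebra.TensorProduct.map (AlgHom.id S S) (K.σ s)

@[simp]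
lemma baseChange_tmul (s : Bool) (a : S) (e : E) :
    K.baseChange S s (a ⊗ₜ e) = a ⊗ₜ K.σ s e := rfl

include K in
lemma tmul_one_injective : Function.Injective fun a : S ↦ a ⊗ₜ[R] (1 : E) := by
  refine Function.LeftInverse.injective
    (g := fun z ↦ (Algebra.TensorProduct.basis S K.basis).repr z K.base) fun a ↦ ?_
  simp [← K.basis_base]

/-- Coefficients of `z` at a non-base vector are fixed by multiplication by all eigenvalues, one of
which differs from `1` by a unit. -/
lemma exists_eq_tmul_one {z : S ⊗[R] E} (hz : ∀ s, K.baseChange S s z = z) :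
    ∃ a : S, z = a ⊗ₜ 1 := by
  classical
  let B := Algebra.TensorProduct.basis S K.basis
  have coord_σ (s : Bool) (i : K.ι) :
      (B.coord i) ∘ₗ (K.baseChange S s).toLinearMap =
        algebraMap R S (K.eigenvalue s i) • B.coord i := by
    refine B.ext fun j ↦ ?_
    rcases eq_or_ne j i with rfl | hji
    · simp [B, K.σ_basis, Algebra.algebraMap_eq_smul_one]
    · simp [B, K.σ_basis, hji]
  have coord_eq_zero (i : K.ι) (hi : i ≠ K.base) : B.repr z i = 0 := by
    obtain ⟨s, hs⟩ := K.exists_isUnit_eigenvalue_sub_one i hi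
    have fixed : B.repr z i = algebraMap R S (K.eigenvalue s i) * B.repr z i := by
      simpa [hz s, Algebra.smul_def] using LinearMap.congr_fun (coord_σ s i) z
    refine (hs.map (algebraMap R S)).mul_right_eq_zero.mp ?_
    rw [map_sub, map_one, sub_mul, one_mul, ← fixed, sub_self]
  refine ⟨B.repr z K.base, B.ext_elem fun i ↦ ?_⟩
  rcases eq_or_ne i K.base with rfl | hi
  · simp [B, ← K.basis_base]
  · simp [B, ← K.basis_base, coord_eq_zero i hi, hi]

include K in
lemma isUnit_of_isUnit_tmul_one {a : S} (h : IsUnit (a ⊗ₜ[R] (1 : E))) : IsUnit a := by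
  obtain ⟨w, hw⟩ := h.exists_right_inv
  have σ_w (s : Bool) : K.baseChange S s w = w := by
    have := congrArg (K.baseChange S s) hw
    rw [map_mul, baseChange_tmul, map_one, map_one] at this
    exact h.mul_left_cancel (this.trans hw.symm)
  obtain ⟨b, rfl⟩ := K.exists_eq_tmul_one σ_w
  rw [Algebra.TensorProduct.tmul_mul_tmul, mul_one, Algebra.TensorProduct.one_def] at hw
  exact .of_mul_eq_one b (K.tmul_one_injective hw)

end DescentDatum

/-- A splitting over `E` of the permutation algebra of `P` twisted by `K`: an invertible matrix over
`E` whose rows are permuted by the two endomorphisms in the same way as the points of `P`. -/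
structure Splitting (K : DescentDatum R E) (P : Type) [PermPair P] [Fintype P]
    [DecidableEq P] where
  /-- the invertible matrix -/
  C : Matrix P P E
  isUnit : IsUnit C
  σ_C (s : Bool) (p j : P) : K.σ s (C p j) = C (act s p) j

variable {K : DescentDatum R E}
variable {P : Type} [PermPair P] [Fintype P] [DecidableEq P]
variable {Q : Type} [PermPair Q] [Fintype Q] [DecidableEq Q]

namespace Splitting

section Coord

variable (g : Splitting K P)

/-- The coordinates over `E`, in which the form of affine space becomes a permuted product of
lines, of a point of affine space. -/
def coord (y : P → S) (p : P) : S ⊗[R] E := ∑ j, y j ⊗ₜ g.C p j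

lemma coord_eq_mulVec (y : P → S) :
    g.coord y = (g.C.map (Algebra.TensorProduct.includeRight : E →ₐ[R] S ⊗[R] E)).mulVec
      fun j ↦ y j ⊗ₜ 1 := by
  ext p
  simp [coord, Matrix.mulVec, dotProduct]

lemma isUnit_map_C : IsUnit (g.C.map (Algebra.TensorProduct.includeRight : E →ₐ[R] S ⊗[R] E)) :=
  g.isUnit.map (Algebra.TensorProduct.includeRight : E →ₐ[R] S ⊗[R] E).mapMatrix

lemma baseChange_coord (y : P → S) (s : Bool) (p : P) :
    K.baseChange S s (g.coord y p) = g.coord y (act s p) := by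
  simp [coord, g.σ_C]

lemma map_coord (f : S →ₐ[R] T) (y : P → S) (p : P) :
    Algebra.TensorProduct.map f (AlgHom.id R E) (g.coord y p) = g.coord (fun j ↦ f (y j)) p := by
  simp [coord]

lemma coord_injective : Function.Injective (g.coord : (P → S) → P → S ⊗[R] E) := by
  intro y y' h
  rw [coord_eq_mulVec, coord_eq_mulVec] at h
  exact funext fun j ↦
    K.tmul_one_injective (congrFun (Matrix.mulVec_injective_of_isUnit g.isUnit_map_C h) j)

lemma exists_coord_eq (u : P → S ⊗[R] E)
    (hu : ∀ s p, K.baseChange S s (u p) = u (act s p)) : ∃ y : P → S, g.coord y = u := by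
  let C' := g.C.map (Algebra.TensorProduct.includeRight : E →ₐ[R] S ⊗[R] E)
  obtain ⟨w, hw : C'.mulVec w = u⟩ :=
    Matrix.mulVec_surjective_iff_isUnit.mpr g.isUnit_map_C u
  have σ_w (s : Bool) : (fun j ↦ K.baseChange S s (w j)) = w := by
    refine Matrix.mulVec_injective_of_isUnit g.isUnit_map_C (funext fun p ↦ ?_)
    have := hu s ((act s).symm p)
    rw [Equiv.apply_symm_apply, ← hw] at this
    simpa [Matrix.mulVec, dotProduct, C', g.σ_C] using this
  choose y hy using fun j ↦ K.exists_eq_tmul_one fun s ↦ congrFun (σ_w s) j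
  refine ⟨y, ?_⟩
  rw [coord_eq_mulVec, ← funext hy, hw]

lemma exists_prod_coord_eq (y : P → S) : ∃ a : S, ∏ p, g.coord y p = a ⊗ₜ 1 :=
  K.exists_eq_tmul_one fun s ↦ by
    simp only [map_prod, g.baseChange_coord]
    exact Equiv.prod_comp (act s) (g.coord y)

/-- The norm form of the splitting: the polynomial over `R` which over `E` is the product of all
coordinates. -/
def norm : MvPolynomial P R := (g.exists_prod_coord_eq MvPolynomial.X).choose

lemma prod_coord (y : P → S) :
    ∏ p, g.coord y p = MvPolynomial.aeval y g.norm ⊗ₜ 1 := by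
  have universal : ∏ p, g.coord (S := MvPolynomial P R) MvPolynomial.X p = g.norm ⊗ₜ 1 :=
    (g.exists_prod_coord_eq MvPolynomial.X).choose_spec
  have := congrArg (Algebra.TensorProduct.map (MvPolynomial.aeval y : _ →ₐ[R] S) (AlgHom.id R E))
    universal
  simpa only [map_prod, g.map_coord, MvPolynomial.aeval_X, Algebra.TensorProduct.map_tmul,
    map_one] using this

end Coord

section MonomialRel

variable (g : Splitting K P) (h : Splitting K Q)

/-- The point `y` has as its coordinates the monomials, with exponent matrix `N`, in the
coordinates of `z`, all of these being invertible. -/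
def MonomialRel (N : Matrix P Q ℤ) (y : P → S) (z : Q → S) : Prop :=
  ∃ (U : P → (S ⊗[R] E)ˣ) (V : Q → (S ⊗[R] E)ˣ),
    (∀ p, (U p : S ⊗[R] E) = g.coord y p) ∧ (∀ q, (V q : S ⊗[R] E) = h.coord z q) ∧
      U = monomial N V

variable {g h}

namespace MonomialRel

variable {N : Matrix P Q ℤ} {y y' : P → S} {z : Q → S}

lemma isUnit_coord (H : MonomialRel g h N y z) (p : P) : IsUnit (g.coord y p) := by
  obtain ⟨U, -, hU, -⟩ := H
  exact hU p ▸ (U p).isUnit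

lemma map (H : MonomialRel g h N y z) (f : S →ₐ[R] T) :
    MonomialRel g h N (fun j ↦ f (y j)) (fun j ↦ f (z j)) := by
  obtain ⟨U, V, hU, hV, rfl⟩ := H
  let φ : (S ⊗[R] E)ˣ →* (T ⊗[R] E)ˣ :=
    Units.map (Algebra.TensorProduct.map f (AlgHom.id R E) : S ⊗[R] E →* T ⊗[R] E)
  refine ⟨fun p ↦ φ (monomial N V p), fun q ↦ φ (V q), fun p ↦ ?_, fun q ↦ ?_,
    funext (map_monomial φ N V)⟩
  · rw [← g.map_coord, ← hU]; rfl
  · rw [← h.map_coord, ← hV]; rfl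

lemma symm {M : Matrix Q P ℤ} (hMN : M * N = 1) (H : MonomialRel g h N y z) :
    MonomialRel h g M z y := by
  obtain ⟨U, V, hU, hV, rfl⟩ := H
  exact ⟨V, monomial N V, hV, hU, by rw [← monomial_mul, hMN, monomial_one]⟩

lemma unique (H : MonomialRel g h N y z) (H' : MonomialRel g h N y' z) : y = y' := by
  obtain ⟨_, V, hU, hV, rfl⟩ := H
  obtain ⟨_, V', hU', hV', rfl⟩ := H'
  obtain rfl : V = V' := funext fun q ↦ Units.ext ((hV q).trans (hV' q).symm)
  exact g.coord_injective (funext fun p ↦ (hU p).symm.trans (hU' p))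

end MonomialRel

variable (g h)

lemma exists_monomialRel {N : Matrix P Q ℤ} (hN : IsEquivariant N) (z : Q → S)
    (hz : ∀ q, IsUnit (h.coord z q)) : ∃ y : P → S, MonomialRel g h N y z := by
  choose V hV using hz
  let τ (s : Bool) : (S ⊗[R] E)ˣ →* (S ⊗[R] E)ˣ :=
    Units.map (K.baseChange S s : S ⊗[R] E →* S ⊗[R] E)
  have τ_V (s : Bool) (q : Q) : τ s (V q) = V (act s q) :=
    Units.ext <| by
      rw [hV, ← h.baseChange_coord, ← hV]
      rfl
  have τ_monomial (s : Bool) (p : P) : τ s (monomial N V p) = monomial N V (act s p) := by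
    rw [map_monomial]
    simp only [τ_V, monomial]
    rw [← Equiv.prod_comp (act s) fun q ↦ V q ^ N (act s p) q]
    simp only [hN s]
  obtain ⟨y, hy⟩ := g.exists_coord_eq (fun p ↦ ((monomial N V p : (S ⊗[R] E)ˣ) : S ⊗[R] E))
    fun s p ↦ congrArg Units.val (τ_monomial s p)
  exact ⟨y, monomial N V, V, fun p ↦ (congrFun hy p).symm, hV, rfl⟩

end MonomialRel

section TorusRing

variable (g : Splitting K P) (h : Splitting K Q)

/-- The coordinate ring of the torus of points with invertible coordinates: the complement of the
norm hypersurface in affine space. -/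
abbrev TorusRing : Type u := Localization.Away g.norm

/-- The universal point of the torus. -/
def universalPoint (j : P) : g.TorusRing := algebraMap (MvPolynomial P R) _ (MvPolynomial.X j)

lemma isUnit_coord_universalPoint (p : P) : IsUnit (g.coord g.universalPoint p) := by
  have aeval_eq : MvPolynomial.aeval g.universalPoint =
      IsScalarTower.toAlgHom R (MvPolynomial P R) g.TorusRing :=
    MvPolynomial.algHom_ext fun j ↦ by simp [universalPoint]
  have isUnit_norm : IsUnit (MvPolynomial.aeval g.universalPoint g.norm) :=
    aeval_eq ▸ IsLocalization.Away.algebraMap_isUnit g.norm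
  refine IsUnit.prod_univ_iff.mp ?_ p
  rw [prod_coord]
  exact isUnit_norm.map (Algebra.TensorProduct.includeLeft : _ →ₐ[R] g.TorusRing ⊗[R] E)

lemma torusRing_hom_ext {f f' : g.TorusRing →ₐ[R] S}
    (H : ∀ j, f (g.universalPoint j) = f' (g.universalPoint j)) : f = f' :=
  IsLocalization.algHom_ext (Submonoid.powers g.norm) (MvPolynomial.algHom_ext H)

lemma exists_torusRing_hom (y : P → S) (hy : ∀ p, IsUnit (g.coord y p)) :
    ∃ f : g.TorusRing →ₐ[R] S, ∀ j, f (g.universalPoint j) = y j := by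
  have isUnit_norm : IsUnit (MvPolynomial.aeval y g.norm) :=
    K.isUnit_of_isUnit_tmul_one (g.prod_coord y ▸ IsUnit.prod_univ_iff.mpr hy)
  have isUnit_powers (w : Submonoid.powers g.norm) :
        IsUnit (MvPolynomial.aeval y (w : MvPolynomial P R)) := by
    obtain ⟨_, n, rfl⟩ := w
    simpa using isUnit_norm.pow n
  exact ⟨IsLocalization.liftAlgHom isUnit_powers, fun j ↦ by simp [universalPoint]⟩

lemma nonempty_torusRing_algEquiv {M : Matrix Q P ℤ} {N : Matrix P Q ℤ} (hMN : M * N = 1)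
    (hNM : N * M = 1) (hM : IsEquivariant M) (hN : IsEquivariant N) :
    Nonempty (g.TorusRing ≃ₐ[R] h.TorusRing) := by
  obtain ⟨y, hy⟩ := exists_monomialRel g h hN h.universalPoint h.isUnit_coord_universalPoint
  obtain ⟨z, hz⟩ := exists_monomialRel h g hM g.universalPoint g.isUnit_coord_universalPoint
  obtain ⟨f, hf⟩ := g.exists_torusRing_hom y hy.isUnit_coord
  obtain ⟨f', hf'⟩ := h.exists_torusRing_hom z hz.isUnit_coord
  have f_z : (fun j ↦ f (z j)) = h.universalPoint :=
    (funext hf ▸ hz.map f : MonomialRel h g M _ y).unique (hy.symm hMN)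
  have f'_y : (fun j ↦ f' (y j)) = g.universalPoint :=
    (funext hf' ▸ hy.map f' : MonomialRel g h N _ z).unique (hz.symm hNM)
  refine ⟨AlgEquiv.ofAlgHom f f' (h.torusRing_hom_ext fun j ↦ ?_)
    (g.torusRing_hom_ext fun j ↦ ?_)⟩
  · simpa [hf'] using congrFun f_z j
  · simpa [hf] using congrFun f'_y j

end TorusRing

end Splitting

end

end

/-! ### Splittings over a Kummer algebra -/

section

open PermPair
open scoped TensorProduct Kronecker

section Matrix

variable {A : Type*} [CommRing A] {m n : Type*} [Fintype m] [DecidableEq m] [Fintype n]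
  [DecidableEq n]

lemma isUnit_fromBlocks_diagonal {M : Matrix m m A} {N : Matrix n n A} (hM : IsUnit M)
    (hN : IsUnit N) : IsUnit (Matrix.fromBlocks M 0 0 N) := by
  rw [Matrix.isUnit_iff_isUnit_det] at hM hN ⊢
  exact Matrix.det_fromBlocks_zero₂₁ M 0 N ▸ hM.mul hN

lemma isUnit_kronecker {M : Matrix m m A} {N : Matrix n n A} (hM : IsUnit M) (hN : IsUnit N) :
    IsUnit (M ⊗ₖ N) := by
  rw [Matrix.isUnit_iff_isUnit_det] at hM hN ⊢
  exact Matrix.det_kronecker M N ▸ (hM.pow _).mul (hN.pow _)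

lemma isUnit_blockDiagonal {M : n → Matrix m m A} (hM : ∀ i, IsUnit (M i)) :
    IsUnit (Matrix.blockDiagonal M) := by
  simp only [Matrix.isUnit_iff_isUnit_det, Matrix.det_blockDiagonal, IsUnit.prod_univ_iff] at hM ⊢
  exact hM

lemma isUnit_vandermonde {n : ℕ} {v : Fin n → A} (h : ∀ i j, i ≠ j → IsUnit (v i - v j)) :
    IsUnit (Matrix.vandermonde v) := by
  rw [Matrix.isUnit_iff_isUnit_det, Matrix.det_vandermonde]
  exact IsUnit.prod_univ_iff.mpr fun i ↦ IsUnit.prod_iff.mpr fun j hj ↦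
    h j i (Finset.mem_Ioi.mp hj).ne'

/-- The Vandermonde matrix on the nodes `v`, indexed by residue classes. -/
def zmodVandermonde {e : ℕ} (v : ZMod e → A) : Matrix (ZMod e) (ZMod e) A :=
  .of fun c j ↦ v c ^ j.val

lemma isUnit_zmodVandermonde {e : ℕ} [NeZero e] {v : ZMod e → A}
    (h : ∀ c d, c ≠ d → IsUnit (v c - v d)) : IsUnit (zmodVandermonde v) := by
  obtain ⟨m, rfl⟩ := Nat.exists_eq_succ_of_ne_zero (NeZero.ne e)
  exact isUnit_vandermonde h

end Matrix

section Constructions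

variable {R E : Type u} [CommRing R] [CommRing E] [Algebra R E] {K : DescentDatum R E}
variable {P : Type} [PermPair P] [Fintype P] [DecidableEq P]
variable {Q : Type} [PermPair Q] [Fintype Q] [DecidableEq Q]

namespace Splitting

/-- The splitting of a set of fixed points. -/
def trivialSet (K : DescentDatum R E) (p : ℕ) [NeZero p] : Splitting K (TrivialSet p) where
  C := 1
  isUnit := isUnit_one
  σ_C s x j := by
    change K.σ s ((1 : Matrix _ _ E) x j) = (1 : Matrix _ _ E) x j
    rw [Matrix.one_apply]
    split_ifs <;> simp

/-- The splitting of a disjoint union. -/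
def sum (g : Splitting K P) (h : Splitting K Q) : Splitting K (P ⊕ Q) where
  C := Matrix.fromBlocks g.C 0 0 h.C
  isUnit := isUnit_fromBlocks_diagonal g.isUnit h.isUnit
  σ_C := by rintro s (x | x) (y | y) <;> simp [g.σ_C, h.σ_C]

/-- The splitting of a product. -/
def prod (g : Splitting K P) (h : Splitting K Q) : Splitting K (P × Q) where
  C := g.C ⊗ₖ h.C
  isUnit := isUnit_kronecker g.isUnit h.isUnit
  σ_C := by
    rintro s ⟨x, x'⟩ ⟨y, y'⟩
    simp [g.σ_C, h.σ_C]

end Splitting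

/-- Two units `Y`, `Z` of `E` with `Y ^ e = f` and `Z ^ e = g`, which are eigenvectors of the two
endomorphisms with eigenvalues given by the character `χ` and the two coordinates of `(ℤ/e)²`. -/
structure KummerPair (K : DescentDatum R E) (e : ℕ) (f g : R) where
  /-- the character of `ℤ/e` -/
  χ : AddChar (ZMod e) R
  isUnit_χ_sub_one (c : ZMod e) (hc : c ≠ 0) : IsUnit (χ c - 1)
  /-- the root of `f` -/
  Y : Eˣ
  /-- the root of `g` -/
  Z : Eˣ
  σ_Y (s : Bool) : K.σ s Y = χ (basisVec e s).1 • (Y : E)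
  σ_Z (s : Bool) : K.σ s Z = χ (basisVec e s).2 • (Z : E)
  Y_pow : (Y : E) ^ e = algebraMap R E f
  Z_pow : (Z : E) ^ e = algebraMap R E g

namespace KummerPair

variable {e : ℕ} {f g : R} (L : KummerPair K e f g)

lemma isUnit_χ_sub_χ {c d : ZMod e} (hcd : c ≠ d) : IsUnit (L.χ c - L.χ d) := by
  have : L.χ c - L.χ d = L.χ d * (L.χ (c - d) - 1) := by
    rw [mul_sub, ← AddChar.map_add_eq_mul, add_sub_cancel, mul_one]
  exact this ▸ (L.χ.val_isUnit d).mul (L.isUnit_χ_sub_one _ (sub_ne_zero.mpr hcd))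

/-- The Vandermonde matrix on the conjugates of the eigenvector `θ`. -/
abbrev eigenMatrix (θ : E) : Matrix (ZMod e) (ZMod e) E :=
  zmodVandermonde fun c ↦ L.χ c • θ

variable [NeZero e] in
lemma isUnit_eigenMatrix (θ : Eˣ) : IsUnit (L.eigenMatrix θ) :=
  isUnit_zmodVandermonde fun c d hcd ↦ by
    rw [← sub_smul, Algebra.smul_def]
    exact ((L.isUnit_χ_sub_χ hcd).map (algebraMap R E)).mul θ.isUnit

lemma σ_eigenMatrix {s : Bool} {d : ZMod e} {θ : E} (hθ : K.σ s θ = L.χ d • θ) (c j : ZMod e) :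
    K.σ s (L.eigenMatrix θ c j) = L.eigenMatrix θ (c + d) j := by
  simp only [zmodVandermonde, Matrix.of_apply, map_pow, map_smul, hθ, AddChar.map_add_eq_mul,
    mul_smul]

variable [NeZero e]

/-- The splitting of the regular set. -/
def splittingRegularSet : Splitting K (RegularSet e) where
  C := L.eigenMatrix L.Y ⊗ₖ L.eigenMatrix L.Z
  isUnit := isUnit_kronecker (L.isUnit_eigenMatrix L.Y) (L.isUnit_eigenMatrix L.Z)
  σ_C := by
    rintro s ⟨v, w⟩ ⟨i, j⟩
    change K.σ s (L.eigenMatrix L.Y v i * L.eigenMatrix L.Z w j) =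
      L.eigenMatrix L.Y (v + (basisVec e s).1) i * L.eigenMatrix L.Z (w + (basisVec e s).2) j
    rw [map_mul, L.σ_eigenMatrix (L.σ_Y s), L.σ_eigenMatrix (L.σ_Z s)]

/-- An eigenvector whose eigenvalues are given by the linear form defining the line `l`. -/
def gen : Option (ZMod e) → Eˣ
  | none => L.Y
  | some a => L.Z * L.Y ^ (e - a.val)

lemma σ_gen (l : Option (ZMod e)) (s : Bool) :
    K.σ s (L.gen l) = L.χ (lineForm l (basisVec e s)) • (L.gen l : E) := by
  cases l with
  | none => exact L.σ_Y s
  | some a =>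
    have exponent : lineForm (some a) (basisVec e s) =
        (basisVec e s).2 + (e - a.val) • (basisVec e s).1 := by
      rw [nsmul_eq_mul, Nat.cast_sub a.val_le, ZMod.natCast_self, ZMod.natCast_zmod_val, zero_sub,
        neg_mul, ← sub_eq_add_neg]
      rfl
    rw [exponent, AddChar.map_add_eq_mul, AddChar.map_nsmul_eq_pow, gen, Units.val_mul,
      Units.val_pow_eq_pow_val, map_mul, map_pow, L.σ_Y, L.σ_Z, smul_pow, smul_mul_smul_comm]

/-- The splitting of the union of the quotients by lines. -/
def splittingLineQuotients : Splitting K (LineQuotients e) where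
  C := Matrix.blockDiagonal fun l ↦ L.eigenMatrix (L.gen l)
  isUnit := isUnit_blockDiagonal fun l ↦ L.isUnit_eigenMatrix (L.gen l)
  σ_C := by
    rintro s ⟨c, l⟩ ⟨j, l'⟩
    change K.σ s (if l = l' then L.eigenMatrix (L.gen l) c j else 0) =
      if l = l' then L.eigenMatrix (L.gen l) (c + lineForm l (basisVec e s)) j else 0
    split_ifs
    · exact L.σ_eigenMatrix (L.σ_gen l s) c j
    · exact map_zero _

/-- The splitting of the disjoint union of the fixed points and of the regular set. -/
def splittingTrivialSumRegular : Splitting K (TrivialSumRegular e) :=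
  (Splitting.trivialSet K e).sum L.splittingRegularSet

/-- An equivariant function on the union of the quotients by lines, with values in Kummer
generators. -/
def lineFunction (b : LineQuotients e) : E := L.χ b.value • (L.gen b.line : E)

lemma σ_lineFunction (s : Bool) (b : LineQuotients e) :
    K.σ s (L.lineFunction b) = L.lineFunction (act s b) := by
  obtain ⟨c, l⟩ := b
  change K.σ s (L.χ c • (L.gen l : E)) =
    L.χ (c + lineForm l (basisVec e s)) • (L.gen l : E)
  rw [map_smul, L.σ_gen, AddChar.map_add_eq_mul, mul_smul]

omit [NeZero e] in
lemma lineFunction_pow (b : LineQuotients e) :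
    L.lineFunction b ^ e = algebraMap R E f ∨
      ∃ j : ℕ, L.lineFunction b ^ e = algebraMap R E (g * f ^ j) := by
  have lineFunction_pow_eq : L.lineFunction b ^ e = (L.gen b.line : E) ^ e := by
    rw [lineFunction, smul_pow, ← AddChar.map_nsmul_eq_pow, nsmul_eq_mul, ZMod.natCast_self,
      zero_mul, AddChar.map_zero_eq_one, one_smul]
  rw [lineFunction_pow_eq]
  cases b.line with
  | none => exact .inl L.Y_pow
  | some a =>
    refine .inr ⟨e - a.val, ?_⟩
    rw [gen, Units.val_mul, Units.val_pow_eq_pow_val, mul_pow, pow_right_comm, L.Y_pow, L.Z_pow,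
      map_mul, map_pow]

end KummerPair

end Constructions

section KummerAlgebra

variable {R : Type u} [CommRing R]

/-- The Kummer algebra obtained by adjoining an `n`-th root of `f`. -/
abbrev KummerAlgebra (R : Type u) [CommRing R] (n : ℕ) (f : R) : Type u :=
  AdjoinRoot (Polynomial.X ^ n - Polynomial.C f : Polynomial R)

/-- The algebra obtained by adjoining `n`-th roots of `f` and of `g`. -/
abbrev BiKummerAlgebra (R : Type u) [CommRing R] (n : ℕ) (f g : R) : Type u :=
  KummerAlgebra R n f ⊗[R] KummerAlgebra R n g

namespace KummerAlgebra

variable {n : ℕ}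

/-- The adjoined root. -/
abbrev root (n : ℕ) (f : R) : KummerAlgebra R n f := AdjoinRoot.root _

lemma root_pow (n : ℕ) (f : R) : root n f ^ n = algebraMap R (KummerAlgebra R n f) f := by
  have := AdjoinRoot.eval₂_root (Polynomial.X ^ n - Polynomial.C f : Polynomial R)
  rwa [Polynomial.eval₂_sub, Polynomial.eval₂_pow, Polynomial.eval₂_X, Polynomial.eval₂_C,
    sub_eq_zero] at this

lemma exists_root_eq {f : R} {S : Type*} [CommRing S] [Algebra R S] {y : S}
    (hy : y ^ n = algebraMap R S f) : ∃ φ : KummerAlgebra R n f →ₐ[R] S, φ (root n f) = y :=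
  ⟨AdjoinRoot.liftAlgHom _ (Algebra.ofId R S) y (by simp [hy]), by simp⟩

lemma exists_rotation (f : R) {z : R} (hz : z ^ n = 1) :
    ∃ ρ : KummerAlgebra R n f →ₐ[R] KummerAlgebra R n f, ρ (root n f) = z • root n f :=
  exists_root_eq (by rw [smul_pow, hz, one_smul, root_pow])

/-- The endomorphism multiplying the root by a root of unity. -/
def rotation (f : R) {z : R} (hz : z ^ n = 1) : KummerAlgebra R n f →ₐ[R] KummerAlgebra R n f :=
  (exists_rotation f hz).choose

lemma rotation_root (f : R) {z : R} (hz : z ^ n = 1) :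
    rotation f hz (root n f) = z • root n f :=
  (exists_rotation f hz).choose_spec

variable [Nontrivial R] [NeZero n]

/-- The basis of powers of the root. -/
def basis (n : ℕ) [NeZero n] (f : R) : Module.Basis (Fin n) R (KummerAlgebra R n f) :=
  let B := AdjoinRoot.powerBasis' (Polynomial.monic_X_pow_sub_C f (NeZero.ne n))
  B.basis.reindex (finCongr (by simp [B]))

lemma basis_apply (f : R) (i : Fin n) : basis n f i = root n f ^ (i : ℕ) := by
  simp [basis]

lemma rotation_basis (f : R) {z : R} (hz : z ^ n = 1) (i : Fin n) :
    rotation f hz (basis n f i) = z ^ (i : ℕ) • basis n f i := by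
  rw [basis_apply, map_pow, rotation_root, smul_pow]

end KummerAlgebra

/-- An `n`-th root of unity whose nontrivial powers differ from `1` by units, for instance the
image of a primitive root of unity of a field. -/
structure IsStrongPrimitiveRoot (z : R) (n : ℕ) : Prop where
  pow_eq_one : z ^ n = 1
  isUnit_pow_sub_one (i : ℕ) (hi : i ≠ 0) (hin : i < n) : IsUnit (z ^ i - 1)

lemma IsStrongPrimitiveRoot.of_isPrimitiveRoot {F : Type*} [Field F] [Algebra F R] {z : F}
    {n : ℕ} (hz : IsPrimitiveRoot z n) : IsStrongPrimitiveRoot (algebraMap F R z) n where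
  pow_eq_one := by rw [← map_pow, hz.pow_eq_one, map_one]
  isUnit_pow_sub_one i hi hin := by
    rw [← map_pow, ← map_one (algebraMap F R), ← map_sub]
    exact (IsUnit.mk0 _ (sub_ne_zero.mpr (hz.pow_ne_one_of_pos_of_lt hi hin))).map _

namespace BiKummerAlgebra

open KummerAlgebra

variable {n : ℕ} [NeZero n] {z : R}

/-- The two rotations of a Kummer algebra with two generators. -/
def rotation (f g : R) (hz : z ^ n = 1) :
    Bool → (BiKummerAlgebra R n f g →ₐ[R] BiKummerAlgebra R n f g)
  | false => Algebra.TensorProduct.map (KummerAlgebra.rotation f hz) (AlgHom.id _ _)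
  | true => Algebra.TensorProduct.map (AlgHom.id _ _) (KummerAlgebra.rotation g hz)

/-- The descent datum given by the two rotations and the basis of monomials. -/
def descentDatum [Nontrivial R] (hz : IsStrongPrimitiveRoot z n) (f g : R) :
    DescentDatum R (BiKummerAlgebra R n f g) where
  σ := rotation f g hz.pow_eq_one
  ι := Fin n × Fin n
  basis := (basis n f).tensorProduct (basis n g)
  base := 0
  basis_base := by
    simp [Module.Basis.tensorProduct_apply', basis_apply, Algebra.TensorProduct.one_def]
  eigenvalue s i := match s with
    | false => z ^ (i.1 : ℕ)
    | true => z ^ (i.2 : ℕ)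
  σ_basis := by
    rintro (_ | _) ⟨i, j⟩
    · simp [rotation, rotation_basis, TensorProduct.smul_tmul']
    · simp [rotation, rotation_basis]
  exists_isUnit_eigenvalue_sub_one := by
    rintro ⟨i, j⟩ hij
    by_cases hi : i = 0
    · refine ⟨true, hz.isUnit_pow_sub_one j (fun hj ↦ hij ?_) j.isLt⟩
      rw [hi, Fin.val_eq_zero_iff.mp hj, Prod.mk_zero_zero]
    · exact ⟨false, hz.isUnit_pow_sub_one i (Fin.val_ne_zero_iff.mpr hi) i.isLt⟩

lemma isUnit_root (f : Rˣ) : IsUnit (root n (f : R)) :=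
  (isUnit_pow_iff (NeZero.ne n)).mp (root_pow n (f : R) ▸ f.isUnit.map _)

lemma isUnit_root_tmul_one (f : Rˣ) (g : R) :
    IsUnit (root n (f : R) ⊗ₜ 1 : BiKummerAlgebra R n (f : R) g) :=
  (isUnit_root f).map (Algebra.TensorProduct.includeLeft : _ →ₐ[R] BiKummerAlgebra R n f g)

lemma isUnit_one_tmul_root (f : R) (g : Rˣ) :
    IsUnit (1 ⊗ₜ root n (g : R) : BiKummerAlgebra R n f (g : R)) :=
  (isUnit_root g).map (Algebra.TensorProduct.includeRight : _ →ₐ[R] BiKummerAlgebra R n f g)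

/-- The character of `ℤ/e` sending `1` to `z ^ m`, where `z` is a root of unity of order `e * m`. -/
def character {e m : ℕ} [NeZero e] (hn : n = e * m) (hz : z ^ n = 1) : AddChar (ZMod e) R :=
  AddChar.zmodChar e (ζ := z ^ m) (by rw [← pow_mul, mul_comm, ← hn, hz])

omit [NeZero n] in
lemma character_one {e m : ℕ} [NeZero e] (hn : n = e * m) (hz : z ^ n = 1) :
    character (e := e) hn hz 1 = z ^ m := by
  simpa [character] using AddChar.zmodChar_apply' (n := e) (ζ := z ^ m) _ 1

/-- The Kummer pair of `m`-th powers of the adjoined roots, where `n = e * m`. -/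
def kummerPair [Nontrivial R] {e m : ℕ} [NeZero e] (hn : n = e * m)
    (hz : IsStrongPrimitiveRoot z n) (f g : Rˣ) :
    KummerPair (descentDatum hz (f : R) (g : R)) e (f : R) (g : R) where
  χ := character hn hz.pow_eq_one
  isUnit_χ_sub_one c hc := by
    have c_ne_zero : c.val ≠ 0 := (ZMod.val_ne_zero c).mpr hc
    have m_ne_zero : m ≠ 0 := right_ne_zero_of_mul (hn ▸ NeZero.ne n)
    rw [character, AddChar.zmodChar_apply, ← pow_mul]
    refine hz.isUnit_pow_sub_one _ (mul_ne_zero m_ne_zero c_ne_zero) ?_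
    rw [hn, mul_comm]
    exact Nat.mul_lt_mul_of_pos_right c.val_lt (Nat.pos_of_ne_zero m_ne_zero)
  Y := (isUnit_root_tmul_one f (g : R)).unit ^ m
  Z := (isUnit_one_tmul_root (f : R) g).unit ^ m
  σ_Y := by
    rintro (_ | _) <;>
    simp [descentDatum, rotation, basisVec, character_one, rotation_root, smul_pow,
      TensorProduct.smul_tmul']
  σ_Z := by
    rintro (_ | _) <;>
    simp [descentDatum, rotation, basisVec, character_one, rotation_root, smul_pow]
  Y_pow := by
    rw [Units.val_pow_eq_pow_val, IsUnit.unit_spec, ← pow_mul, mul_comm, ← hn,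
      Algebra.TensorProduct.tmul_pow, root_pow, one_pow]
    rfl
  Z_pow := by
    rw [Units.val_pow_eq_pow_val, IsUnit.unit_spec, ← pow_mul, mul_comm, ← hn,
      Algebra.TensorProduct.tmul_pow, root_pow, one_pow]
    exact (Algebra.TensorProduct.algebraMap_apply' _).symm

lemma nonempty_algHom (f g : R) (Ω : Type*) [Field Ω] [IsAlgClosed Ω] [Algebra R Ω] :
    Nonempty (BiKummerAlgebra R n f g →ₐ[R] Ω) := by
  have hn : 0 < n := Nat.pos_of_neZero n
  obtain ⟨y, hy⟩ := IsAlgClosed.exists_pow_nat_eq (algebraMap R Ω f) hn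
  obtain ⟨w, hw⟩ := IsAlgClosed.exists_pow_nat_eq (algebraMap R Ω g) hn
  exact ⟨Algebra.TensorProduct.productMap (exists_root_eq hy).choose (exists_root_eq hw).choose⟩

end BiKummerAlgebra

end KummerAlgebra

end

/-! ### The two exotic splittings -/

section

open PermPair

section ExoticSplittings

variable {R E : Type u} [CommRing R] [CommRing E] [Algebra R E] {K : DescentDatum R E} {f g : R}
  {p q : ℕ} (L : KummerPair K p f g) (L' : KummerPair K q f g)

/-- An equivariant function on `OddSet p q` with values in Kummer generators. -/
def oddFunction : OddSet p q → E
  | .inl x => L.lineFunction x.1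
  | .inr x => L'.lineFunction x.2

lemma oddFunction_pow (x : OddSet p q) : ∃ e ∈ ({p, q} : Set ℕ),
    oddFunction L L' x ^ e = algebraMap R E f ∨
      ∃ j : ℕ, oddFunction L L' x ^ e = algebraMap R E (g * f ^ j) := by
  obtain x | x := x
  · exact ⟨p, .inl rfl, L.lineFunction_pow x.1⟩
  · exact ⟨q, .inr rfl, L'.lineFunction_pow x.2⟩

variable [NeZero p] [NeZero q]

lemma σ_oddFunction (s : Bool) (x : OddSet p q) :
    K.σ s (oddFunction L L' x) = oddFunction L L' (act s x) := by
  obtain x | x := x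
  · exact L.σ_lineFunction s x.1
  · exact L'.σ_lineFunction s x.2

/-- The splitting of the set `EvenSet p q` induced by Kummer generators of degrees `p`, `q`. -/
def evenSplitting : Splitting K (EvenSet p q) :=
  (L.splittingTrivialSumRegular.prod L'.splittingTrivialSumRegular).sum
    (L.splittingLineQuotients.prod L'.splittingLineQuotients)

/-- The splitting of the set `OddSet p q` induced by Kummer generators of degrees `p`, `q`. -/
def oddSplitting : Splitting K (OddSet p q) :=
  (L.splittingLineQuotients.prod L'.splittingTrivialSumRegular).sum
    (L.splittingTrivialSumRegular.prod L'.splittingLineQuotients)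

/-- A fixed point of `EvenSet p q`; there is none in `OddSet p q`. -/
def fixedPoint (p q : ℕ) : EvenSet p q :=
  .inl (.inl (0 : ZMod p), .inl (0 : ZMod q))

omit [NeZero q] in
lemma splittingTrivialSumRegular_C_inl (a : TrivialSet p) (j : TrivialSumRegular p) :
    L.splittingTrivialSumRegular.C (.inl a) j = if j = .inl a then 1 else 0 := by
  obtain b | b := j
  · change (1 : Matrix (TrivialSet p) (TrivialSet p) E) a b = _
    simp only [Matrix.one_apply, Sum.inl.injEq, eq_comm]
  · exact (if_neg Sum.inr_ne_inl).symm

lemma evenSplitting_C_fixedPoint (j : EvenSet p q) :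
    (evenSplitting L L').C (fixedPoint p q) j = if j = fixedPoint p q then 1 else 0 := by
  obtain ⟨a, b⟩ | b := j
  · refine (congrArg₂ (· * ·) (splittingTrivialSumRegular_C_inl L (0 : ZMod p) a)
      (splittingTrivialSumRegular_C_inl L' (0 : ZMod q) b)).trans ?_
    simp only [fixedPoint, Sum.inl.injEq, Prod.mk.injEq, ite_and, mul_ite, mul_one, mul_zero]
    split_ifs <;> rfl
  · exact (if_neg Sum.inr_ne_inl).symm

open scoped TensorProduct in
lemma aeval_norm_evenSplitting_eq_zero {S : Type u} [CommRing S] [Algebra R S]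
    (y : EvenSet p q → S) (hy : y (fixedPoint p q) = 0) :
    MvPolynomial.aeval y (evenSplitting L L').norm = 0 := by
  refine K.tmul_one_injective (((evenSplitting L L').prod_coord y).symm.trans ?_)
  refine (Finset.prod_eq_zero (Finset.mem_univ (fixedPoint p q)) ?_).trans
    (TensorProduct.zero_tmul S 1).symm
  simp only [Splitting.coord, evenSplitting_C_fixedPoint, TensorProduct.tmul_ite,
    Finset.sum_ite_eq', Finset.mem_univ, if_true, hy,
    TensorProduct.zero_tmul]

end ExoticSplittings

lemma nonempty_torusRing_algEquiv_evenSplitting_oddSplitting {R E : Type u} [CommRing R]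
    [CommRing E] [Algebra R E] {K : DescentDatum R E} {f g : R} {p q : ℕ} [Fact p.Prime]
    [Fact q.Prime] (hpq : p ≠ q) (L : KummerPair K p f g) (L' : KummerPair K q f g) :
    Nonempty ((evenSplitting L L').TorusRing ≃ₐ[R] (oddSplitting L L').TorusRing) := by
  obtain ⟨a, b, hab⟩ : IsCoprime ((p : ℤ) ^ 2) ((q : ℤ) ^ 2) :=
    (Nat.isCoprime_iff_coprime.mpr ((Nat.coprime_primes Fact.out Fact.out).mpr hpq)).pow
  replace hab : a * (p : ℤ) ^ 2 - -b * (q : ℤ) ^ 2 = 1 := by linear_combination hab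
  exact Splitting.nonempty_torusRing_algEquiv _ _ (exoticMatrix_mul_exoticMatrixInv p q hab)
    (exoticMatrixInv_mul_exoticMatrix p q hab) (isEquivariant_exoticMatrix p q a (-b))
    (isEquivariant_exoticMatrixInv p q a (-b))

end

/-! ### A Fermat-type property of purely transcendental extensions -/

section

open Polynomial

lemma exists_root_of_isIntegrallyClosed {A K : Type*} [CommRing A] [IsIntegrallyClosed A]
    [CommRing K] [Algebra A K] [IsFractionRing A K] {e : ℕ} (he : e ≠ 0) {y : K} {w : A}
    (h : y ^ e = algebraMap A K w) : ∃ c : A, algebraMap A K c = y ∧ c ^ e = w := by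
  have y_isIntegral : IsIntegral A y :=
    .of_pow (Nat.pos_of_ne_zero he) (h ▸ isIntegral_algebraMap)
  obtain ⟨c, rfl⟩ := IsIntegrallyClosed.isIntegral_iff.mp y_isIntegral
  exact ⟨c, rfl, IsFractionRing.injective A K (by rw [map_pow, h])⟩

section RatFunc

variable {F : Type u} [Field F] {e n : ℕ}

lemma exists_algebraMap_eq_of_pow_eq (he : e ≠ 0) {y : RatFunc F} {r : F}
    (h : y ^ e = algebraMap F (RatFunc F) r) : ∃ s, algebraMap F (RatFunc F) s = y := by
  rw [IsScalarTower.algebraMap_apply F F[X] (RatFunc F)] at h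
  obtain ⟨c, rfl, hc⟩ := exists_root_of_isIntegrallyClosed he h
  have natDegree_c : c.natDegree = 0 := by
    have := congrArg natDegree hc
    rw [natDegree_pow, algebraMap_eq, natDegree_C] at this
    exact (Nat.mul_eq_zero.mp this).resolve_left he
  exact ⟨c.coeff 0, by
    rw [IsScalarTower.algebraMap_apply F F[X] (RatFunc F), algebraMap_eq,
      ← eq_C_of_natDegree_eq_zero natDegree_c]⟩

lemma isCoprime_pow_sub_pow {a b : F[X]} {l : F} (hl : l ≠ 1) (hab : IsCoprime a b) :
    IsCoprime (a ^ n - C l * b ^ n) (a ^ n - b ^ n) := by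
  obtain ⟨s, t, hst⟩ := hab.pow (m := n) (n := n)
  have inv_mul : C (1 - l)⁻¹ * (1 - C l) = (1 : F[X]) := by
    rw [← C_1, ← C_sub, ← C_mul, inv_mul_cancel₀ (sub_ne_zero.mpr hl.symm)]
  refine ⟨C (1 - l)⁻¹ * (s + t), s - C (1 - l)⁻¹ * (s + t), ?_⟩
  linear_combination hst + (s + t) * b ^ n * inv_mul

/-- By coprimality `a ^ n - l * b ^ n` is itself a constant times an `e`-th power, and the
Fermat-Catalan theorem for polynomials applies. -/
lemma natDegree_eq_zero_of_pow_eq (hn : (n : F) ≠ 0) (he : (e : F) ≠ 0)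
    (hne : n + 2 * e ≤ e * n) {a b c : F[X]} {l : F} {j : ℕ} (hab : IsCoprime a b)
    (ha : a ≠ 0) (hb : b ≠ 0) (hc : c ≠ 0) (hl : l ≠ 0) (hlj : l = 1 → j = 0)
    (h : c ^ e = (a ^ n - C l * b ^ n) * (a ^ n - b ^ n) ^ j) :
    a.natDegree = 0 ∧ b.natDegree = 0 := by
  have he₀ : e ≠ 0 := by rintro rfl; exact he Nat.cast_zero
  have hn₀ : n ≠ 0 := by rintro rfl; exact hn Nat.cast_zero
  have coprime : IsCoprime (a ^ n - C l * b ^ n) ((a ^ n - b ^ n) ^ j) := by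
    rcases eq_or_ne l 1 with hl1 | hl1
    · rw [hlj hl1, pow_zero]
      exact isCoprime_one_right
    · exact (isCoprime_pow_sub_pow hl1 hab).pow_right
  obtain ⟨d, v, hd⟩ := exists_associated_pow_of_mul_eq_pow' coprime h.symm
  obtain ⟨r, hr, hrv⟩ := Polynomial.isUnit_iff.mp v.isUnit
  have hd₀ : d ≠ 0 := by
    rintro rfl
    rw [← hd, zero_pow he₀, zero_mul, zero_mul] at h
    exact hc (eq_zero_of_pow_eq_zero h)
  have relation : C 1 * a ^ n + C (-l) * b ^ n + C (-r) * d ^ e = 0 := by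
    rw [C_neg, C_neg, C_1]
    linear_combination -hd - d ^ e * hrv
  have := flt_catalan hn₀ hn₀ he₀ (by nlinarith) hn hn he ha hb hd₀ hab one_ne_zero
    (neg_ne_zero.mpr hl) (neg_ne_zero.mpr hr.ne_zero) relation
  exact ⟨this.1, this.2.1⟩

lemma exists_algebraMap_eq_of_pow_eq_mul (hn : (n : F) ≠ 0) (hen : e ∣ n)
    (hne : n + 2 * e ≤ e * n) {x θ : RatFunc F} {l : F} {j : ℕ} (hl : l ≠ 0)
    (hlj : l = 1 → j = 0) (hθ : θ ≠ 0)
    (h : θ ^ e = (x ^ n - algebraMap F (RatFunc F) l) * (x ^ n - 1) ^ j) :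
    ∃ y, algebraMap F (RatFunc F) y = x := by
  rcases eq_or_ne x 0 with rfl | hx
  · exact ⟨0, map_zero _⟩
  obtain ⟨m, rfl⟩ := hen
  have he : (e : F) ≠ 0 := fun he ↦ hn (by rw [Nat.cast_mul, he, zero_mul])
  have he₀ : e ≠ 0 := by rintro rfl; exact he Nat.cast_zero
  obtain ⟨a, ⟨b, hb⟩, hab, rfl⟩ := IsFractionRing.exists_reduced_fraction F[X] x
  replace hb := nonZeroDivisors.ne_zero hb
  rw [IsFractionRing.mk'_eq_div] at h hx ⊢
  set ι := algebraMap F[X] (RatFunc F)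
  have ι_C (r : F) : algebraMap F (RatFunc F) r = ι (C r) :=
    IsScalarTower.algebraMap_apply F F[X] (RatFunc F) r
  have ι_b : ι b ≠ 0 := by rwa [Ne, map_eq_zero_iff ι (IsFractionRing.injective _ _)]
  have clear_denominators : (θ * ι b ^ (m * (1 + j))) ^ e =
      ι ((a ^ (e * m) - C l * b ^ (e * m)) * (a ^ (e * m) - b ^ (e * m)) ^ j) := by
    have scale (N : ℕ) (r : F[X]) : ι (a ^ N - r * b ^ N) = ((ι a / ι b) ^ N - ι r) * ι b ^ N := by
      rw [sub_mul, ← mul_pow, div_mul_cancel₀ _ ι_b, map_sub, map_mul, map_pow, map_pow]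
    have scale_one := scale (e * m) 1
    rw [one_mul, map_one] at scale_one
    rw [map_mul, map_pow, scale, scale_one, mul_pow, mul_pow, h, ι_C]
    ring
  obtain ⟨c, hc, hc_pow⟩ := exists_root_of_isIntegrallyClosed he₀ clear_denominators
  have hc₀ : c ≠ 0 := by
    rintro rfl
    exact mul_ne_zero hθ (pow_ne_zero _ ι_b) (by rw [← hc, map_zero])
  have ha : a ≠ 0 := by
    rintro rfl
    simp at hx
  obtain ⟨a_const, b_const⟩ := natDegree_eq_zero_of_pow_eq hn he hne
    (isRelPrime_iff_isCoprime.mp hab) ha hb hc₀ hl hlj hc_pow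
  refine ⟨a.coeff 0 / b.coeff 0, ?_⟩
  rw [map_div₀, ι_C, ι_C, ← eq_C_of_natDegree_eq_zero a_const,
    ← eq_C_of_natDegree_eq_zero b_const]

end RatFunc

/-- The curves `θ ^ e = (x ^ n - l) * (x ^ n - 1) ^ j` with `e ∈ T` and `l ^ n = 1` have no points
over `F` besides those whose coordinate `x` is algebraic over `k`. The case `l = 1` is only included
for `j = 0`. -/
def FermatProperty (k F : Type u) [Field k] [Field F] [Algebra k F] (n : ℕ) (T : Set ℕ) : Prop :=
  ∀ e ∈ T, ∀ (x θ l : F) (j : ℕ), l ^ n = 1 → (l = 1 → j = 0) →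
    θ ^ e = (x ^ n - l) * (x ^ n - 1) ^ j → IsAlgebraic k x

section FermatProperty

variable {k : Type u} [Field k] {n : ℕ} {T : Set ℕ}

lemma fermatProperty_self (k : Type u) [Field k] (n : ℕ) (T : Set ℕ) : FermatProperty k k n T :=
  fun _ _ _ _ _ _ _ _ _ ↦ isAlgebraic_algebraMap _

lemma FermatProperty.ratFunc {F : Type u} [Field F] [Algebra k F] (hn : (n : k) ≠ 0)
    (hT : ∀ e ∈ T, e ∣ n ∧ n + 2 * e ≤ e * n) (H : FermatProperty k F n T) :
    FermatProperty k (RatFunc F) n T := by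
  intro e he x θ l j hl hlj h
  have hn₀ : n ≠ 0 := by rintro rfl; exact hn Nat.cast_zero
  have he₀ : e ≠ 0 := by rintro rfl; exact hn₀ (zero_dvd_iff.mp (hT 0 he).1)
  have isAlgebraic_of_pow_eq {r : RatFunc F} (hr : r ^ n = 1) (hx : x ^ n = r) :
      IsAlgebraic k x := by
    refine .of_pow (Nat.mul_pos (Nat.pos_of_ne_zero hn₀) (Nat.pos_of_ne_zero hn₀)) ?_
    rw [pow_mul, hx, hr]
    exact isAlgebraic_one
  rcases eq_or_ne θ 0 with rfl | hθ
  · rw [zero_pow he₀, zero_eq_mul] at h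
    rcases h with h | h
    · exact isAlgebraic_of_pow_eq hl (sub_eq_zero.mp h)
    · exact isAlgebraic_of_pow_eq (one_pow n) (sub_eq_zero.mp (eq_zero_of_pow_eq_zero h))
  have hnF : (n : F) ≠ 0 := by
    rw [← map_natCast (algebraMap k F)]
    exact (_root_.map_ne_zero _).mpr hn
  obtain ⟨l, rfl⟩ := exists_algebraMap_eq_of_pow_eq hn₀ (hl.trans (map_one _).symm)
  rw [← map_pow, map_eq_one_iff _ (algebraMap F (RatFunc F)).injective] at hl
  rw [map_eq_one_iff _ (algebraMap F (RatFunc F)).injective] at hlj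
  have hl₀ : l ≠ 0 := by
    rintro rfl
    exact zero_ne_one ((zero_pow hn₀).symm.trans hl)
  obtain ⟨x, rfl⟩ := exists_algebraMap_eq_of_pow_eq_mul hnF (hT e he).1 (hT e he).2
    hl₀ hlj hθ h
  rw [← map_pow, ← map_one (algebraMap F (RatFunc F)), ← map_sub, ← map_sub, ← map_pow,
    ← map_mul] at h
  obtain ⟨θ, rfl⟩ := exists_algebraMap_eq_of_pow_eq he₀ h
  rw [← map_pow] at h
  exact (isAlgebraic_algebraMap_iff (algebraMap F (RatFunc F)).injective).mpr
    (H e he x θ l j hl hlj ((algebraMap F (RatFunc F)).injective h))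

lemma exists_fermatProperty (hn : (n : k) ≠ 0)
    (hT : ∀ e ∈ T, e ∣ n ∧ n + 2 * e ≤ e * n) (m : ℕ) :
    ∃ (F : Type u) (_ : Field F) (_ : Algebra k F) (v : Fin m → F),
      AlgebraicIndependent k v ∧ FermatProperty k F n T := by
  induction m with
  | zero =>
    exact ⟨k, inferInstance, inferInstance, Fin.elim0,
      algebraicIndependent_empty_type_iff.mpr (algebraMap k k).injective,
      fermatProperty_self k n T⟩
  | succ m ih =>
    obtain ⟨F, _, _, v, hv, H⟩ := ih
    have hX : AlgebraicIndependent F (fun _ : Unit ↦ (RatFunc.X : RatFunc F)) :=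
      algebraicIndependent_unique_type_iff.mpr RatFunc.transcendental_X
    let index : Fin (m + 1) ≃ Unit ⊕ Fin m :=
      (finSuccEquiv m).trans ((Equiv.optionEquivSumPUnit (Fin m)).trans (Equiv.sumComm _ _))
    exact ⟨RatFunc F, inferInstance, inferInstance, _,
      (hv.sumElim_comp hX).comp index index.injective, H.ratFunc hn hT⟩

end FermatProperty

end

/-! ### Points of the norm hypersurfaces -/

section

open IntermediateField PermPair
open scoped TensorProduct

section AlgebraicIndependence

open scoped IntermediateField.algebraAdjoinAdjoin

variable {k Ω : Type*} [Field k] [Field Ω] [Algebra k Ω]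

lemma card_le_eRk_of_isAlgebraic_adjoin {ι : Type*} {w : ι → Ω} {s : Set Ω}
    (hw : AlgebraicIndependent k w) (h : ∀ i, IsAlgebraic (adjoin k s) (w i)) :
    ENat.card ι ≤ (AlgebraicIndependent.matroid k Ω).eRk s := by
  let M := AlgebraicIndependent.matroid k Ω
  have range_subset : Set.range w ⊆ M.closure s := by
    rintro _ ⟨i, rfl⟩
    rw [AlgebraicIndependent.matroid_closure_eq]
    exact (IsFractionRing.isAlgebraic_iff (Algebra.adjoin k s) (adjoin k s) Ω).mpr (h i)
  have indep : M.Indep (Set.range w) := hw.to_subtype_range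
  calc ENat.card ι ≤ (Set.range w).encard := hw.injective.encard_range
    _ ≤ M.eRk (M.closure s) := indep.encard_le_eRk_of_subset range_subset
    _ = M.eRk s := M.eRk_closure_eq s

/-- Compare ranks in the matroid of algebraic independence. -/
lemma algebraicIndependent_of_isAlgebraic_adjoin {ι ι' : Type*} [Finite ι] [Finite ι']
    {v : ι → Ω} {w : ι' → Ω} (hw : AlgebraicIndependent k w) (hcard : Nat.card ι ≤ Nat.card ι')
    (h : ∀ i, IsAlgebraic (adjoin k (Set.range v)) (w i)) : AlgebraicIndependent k v := by
  let M := AlgebraicIndependent.matroid k Ω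
  have card_le : ENat.card ι ≤ M.eRk (Set.range v) := by
    refine le_trans ?_ (card_le_eRk_of_isAlgebraic_adjoin hw h)
    rw [ENat.card_eq_coe_natCard, ENat.card_eq_coe_natCard]
    exact_mod_cast hcard
  have encard_v_le : (Set.range v).encard ≤ ENat.card ι := by
    rw [← Set.image_univ, ← Set.encard_univ]
    exact Set.encard_image_le _ _
  have injective_v : Function.Injective v := by
    rw [← Set.injOn_univ]
    refine Set.finite_univ.injOn_of_encard_image_eq ?_
    rw [Set.image_univ, Set.encard_univ]
    exact encard_v_le.antisymm (card_le.trans (M.eRk_le_encard _))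
  refine (algebraicIndependent_subtype_range injective_v).mp ?_
  exact (M.indep_iff_eRk_eq_encard_of_finite (Set.finite_range v)).mpr
    ((M.eRk_le_encard _).antisymm (encard_v_le.trans card_le))

lemma mem_algebraicClosure_of_isIntegral {R : Type*} [CommRing R] [Algebra R Ω]
    (h : ∀ r, algebraMap R Ω r ∈ algebraicClosure k Ω) {a : Ω} (ha : IsIntegral R a) :
    a ∈ algebraicClosure k Ω := by
  let φ : R →+* algebraicClosure k Ω :=
    (algebraMap R Ω).codRestrict (algebraicClosure k Ω).toSubfield.toSubring h
  let : Algebra R (algebraicClosure k Ω) := φ.toAlgebra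
  have : IsScalarTower R (algebraicClosure k Ω) Ω := .of_algebraMap_eq fun _ ↦ rfl
  exact mem_algebraicClosure_iff.mpr
    ((ha.tower_top (A := algebraicClosure k Ω)).isAlgebraic.restrictScalars k)

end AlgebraicIndependence

namespace Splitting

variable {R E : Type u} [CommRing R] [CommRing E] [Algebra R E] {K : DescentDatum R E}
variable {P : Type} [PermPair P] [Fintype P] [DecidableEq P] (g : Splitting K P)

section Eval

variable {S : Type u} [CommRing S] [Algebra R S] (ε : E →ₐ[R] S) (y : P → S)

/-- The coordinates of the point `y`, specialized along `ε`. -/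
def eval (p : P) : S := ∑ j, y j * ε (g.C p j)

lemma productMap_coord (p : P) :
    Algebra.TensorProduct.productMap (AlgHom.id R S) ε (g.coord y p) = g.eval ε y p := by
  simp [coord, eval]

lemma prod_eval : ∏ p, g.eval ε y p = MvPolynomial.aeval y g.norm := by
  have := congrArg (Algebra.TensorProduct.productMap (AlgHom.id R S) ε) (g.prod_coord y)
  simpa [map_prod, productMap_coord] using this

lemma eq_sum_eval (j : P) : y j = ∑ p, ε (g.C⁻¹ j p) * g.eval ε y p := by
  have inv_mul : (g.C⁻¹).map ε * g.C.map ε = 1 := by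
    rw [← Matrix.map_mul, Matrix.nonsing_inv_mul _ ((Matrix.isUnit_iff_isUnit_det _).mp g.isUnit),
      Matrix.map_one _ (map_zero ε) (map_one ε)]
  have eval_eq : g.eval ε y = (g.C.map ε).mulVec y := by
    ext p
    simp [eval, Matrix.mulVec, dotProduct, mul_comm]
  have := congrFun (congrArg ((g.C⁻¹).map ε).mulVec eval_eq) j
  rw [Matrix.mulVec_mulVec, inv_mul, Matrix.one_mulVec] at this
  exact this.symm

lemma exists_sum_mul_prod_erase_coord_eq {r : P → E} (hr : ∀ s p, K.σ s (r p) = r (act s p)) :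
    ∃ a : S, ∑ q, (1 ⊗ₜ r q) * ∏ q' ∈ Finset.univ.erase q, g.coord y q' = a ⊗ₜ 1 := by
  refine K.exists_eq_tmul_one fun s ↦ ?_
  simp only [map_sum, map_mul, map_prod, DescentDatum.baseChange_tmul, hr, g.baseChange_coord]
  refine Fintype.sum_equiv (act s) _ _ fun q ↦ congrArg (1 ⊗ₜ r (act s q) * ·) ?_
  refine Finset.prod_equiv (act s) (fun q' ↦ ?_) fun _ _ ↦ rfl
  simp only [Finset.mem_erase, Finset.mem_univ, and_true, ne_eq, EmbeddingLike.apply_eq_iff_eq]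

/-- The sum over all `q` of `r q` times the product of the coordinates other than `q` descends to
`S`; at a point whose coordinate `p₀` vanishes only the summand of `p₀` survives. -/
lemma exists_eq_mul_prod_erase_eval {r : P → E} (hr : ∀ s p, K.σ s (r p) = r (act s p))
    {A : Type u} [CommRing A] [Algebra R A] [Algebra A S] [IsScalarTower R A S] (y : P → A)
    {p₀ : P} (hp₀ : g.eval ε (algebraMap A S ∘ y) p₀ = 0) :
    ∃ a : A, algebraMap A S a =
      ε (r p₀) * ∏ q ∈ Finset.univ.erase p₀, g.eval ε (algebraMap A S ∘ y) q := by
  obtain ⟨a, ha⟩ := g.exists_sum_mul_prod_erase_coord_eq y hr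
  let φ : A ⊗[R] E →ₐ[R] S :=
    Algebra.TensorProduct.productMap (IsScalarTower.toAlgHom R A S) ε
  have φ_coord (q : P) : φ (g.coord y q) = g.eval ε (algebraMap A S ∘ y) q := by
    simp [φ, coord, eval]
  refine ⟨a, ?_⟩
  have sum_eq := congrArg φ ha
  simp only [map_sum, map_mul, map_prod, φ_coord] at sum_eq
  rw [Finset.sum_eq_single_of_mem p₀ (Finset.mem_univ _) fun q _ hq ↦ ?_] at sum_eq
  · simpa [φ] using sum_eq.symm
  · rw [Finset.prod_eq_zero (Finset.mem_erase.mpr ⟨hq.symm, Finset.mem_univ _⟩) hp₀, mul_zero]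

end Eval

section Field

variable {k Ω : Type u} [Field k] [Field Ω] [Algebra k Ω] [Algebra R Ω] (ε : E →ₐ[R] Ω)

/-- An equivariant function can be evaluated on a generic point of the norm hypersurface without
specializing `E`. -/
lemma exists_algebraMap_eq_of_eval_eq_zero {Ξ : Type u} [Field Ξ] [Algebra R Ξ] [Algebra Ξ Ω]
    [IsScalarTower R Ξ Ω] {r : P → E} (hr : ∀ s p, K.σ s (r p) = r (act s p)) {y : P → Ξ} {p₀ : P}
    (hp₀ : g.eval ε (algebraMap Ξ Ω ∘ y) p₀ = 0)
    (hq : ∀ q ≠ p₀, g.eval ε (algebraMap Ξ Ω ∘ y) q ≠ 0) :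
    ∃ θ : Ξ, algebraMap Ξ Ω θ = ε (r p₀) := by
  obtain ⟨a, ha⟩ := g.exists_eq_mul_prod_erase_eval ε hr y hp₀
  obtain ⟨b, hb⟩ :=
    g.exists_eq_mul_prod_erase_eval (r := fun _ ↦ 1) ε (fun _ _ ↦ map_one _) y hp₀
  refine ⟨a / b, ?_⟩
  rw [map_div₀, ha, hb, map_one, one_mul, mul_div_cancel_right₀]
  exact Finset.prod_ne_zero_iff.mpr fun q h ↦ hq q (Finset.ne_of_mem_erase h)

variable [Algebra.IsIntegral R E]

/-- The field generated by the point is algebraic over the field generated by the parameter `x` of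
the base and the coordinates, one of which vanishes: there is no room for an algebraic relation. -/
lemma algebraicIndependent_update_eval {x : R}
    (hx : ∀ r, IsAlgebraic k⟮algebraMap R Ω x⟯ (algebraMap R Ω r)) {y : P → Ω} {t : Ω} {p₀ : P}
    (hp₀ : g.eval ε y p₀ = 0) {w : Option P → Ω} (hw : AlgebraicIndependent k w)
    (hwy : ∀ i, w i ∈ adjoin k (insert t (Set.range (MvPolynomial.aeval (R := R) y)))) :
    AlgebraicIndependent k fun i : Option P ↦
      i.elim t (Function.update (g.eval ε y) p₀ (algebraMap R Ω x)) := by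
  set v : Option P → Ω := fun i ↦ i.elim t (Function.update (g.eval ε y) p₀ (algebraMap R Ω x))
  let L := adjoin k (Set.range v)
  let A := algebraicClosure L Ω
  have v_mem_L (i : Option P) : v i ∈ L := subset_adjoin _ _ ⟨i, rfl⟩
  have v_mem (i : Option P) : v i ∈ A :=
    mem_algebraicClosure_iff.mpr (isAlgebraic_algebraMap (⟨v i, v_mem_L i⟩ : L))
  have base_mem (r : R) : algebraMap R Ω r ∈ A := by
    have adjoin_x_le : k⟮algebraMap R Ω x⟯ ≤ L :=
      adjoin_simple_le_iff.mpr (by simpa [v] using v_mem_L (some p₀))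
    let : Algebra k⟮algebraMap R Ω x⟯ L := (inclusion adjoin_x_le).toRingHom.toAlgebra
    have : IsScalarTower k⟮algebraMap R Ω x⟯ L Ω := .of_algebraMap_eq fun _ ↦ rfl
    exact mem_algebraicClosure_iff.mpr ((hx r).tower_top L)
  have ε_mem (e : E) : ε e ∈ A :=
    mem_algebraicClosure_of_isIntegral base_mem ((Algebra.IsIntegral.isIntegral e).map ε)
  have eval_mem (p : P) : g.eval ε y p ∈ A := by
    rcases eq_or_ne p p₀ with rfl | hp
    · exact hp₀ ▸ zero_mem A
    · simpa [v, hp] using v_mem (some p)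
  have y_mem (j : P) : y j ∈ A :=
    g.eq_sum_eval ε y j ▸ sum_mem fun p _ ↦ mul_mem (ε_mem _) (eval_mem p)
  have aeval_mem (a : MvPolynomial P R) : MvPolynomial.aeval y a ∈ A := by
    induction a using MvPolynomial.induction_on with
    | C r => simpa using base_mem r
    | add a b ha hb => simpa using add_mem ha hb
    | mul_X a j ha => simpa using mul_mem ha (y_mem j)
  have adjoin_le : adjoin k (insert t (Set.range (MvPolynomial.aeval (R := R) y))) ≤
      A.restrictScalars k := by
    rw [adjoin_le_iff, Set.insert_subset_iff]
    exact ⟨v_mem none, Set.range_subset_iff.mpr aeval_mem⟩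
  exact algebraicIndependent_of_isAlgebraic_adjoin hw le_rfl fun i ↦
    mem_algebraicClosure_iff.mp (adjoin_le (hwy i))

end Field

end Splitting

lemma algebraMap_mem_adjoin_insert_range_aeval {k R Ξ Ω ι : Type*} [Field k] [CommRing R]
    [Field Ξ] [Field Ω] [Algebra k Ξ] [Algebra R Ξ] [Algebra k Ω] [Algebra R Ω] [Algebra Ξ Ω]
    [IsScalarTower k Ξ Ω] [IsScalarTower R Ξ Ω] {y : ι → Ξ} {t w : Ξ}
    (hw : w ∈ adjoin k (insert t (Set.range (MvPolynomial.aeval (R := R) y)))) :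
    algebraMap Ξ Ω w ∈ adjoin k (insert (algebraMap Ξ Ω t)
      (Set.range (MvPolynomial.aeval (R := R) (algebraMap Ξ Ω ∘ y)))) := by
  have image_eq : IsScalarTower.toAlgHom k Ξ Ω ''
        insert t (Set.range (MvPolynomial.aeval (R := R) y)) =
      insert (algebraMap Ξ Ω t)
        (Set.range (MvPolynomial.aeval (R := R) (algebraMap Ξ Ω ∘ y))) := by
    rw [Set.image_insert_eq, ← Set.range_comp]
    exact congrArg (fun f ↦ insert (algebraMap Ξ Ω t) (Set.range f))
      (funext fun a ↦ (MvPolynomial.aeval_algebraMap_apply Ω y a).symm)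
  rw [← image_eq, ← adjoin_map]
  exact ⟨w, hw, rfl⟩

/-- A transcendental parameter `x` and an `e`-th root of `f` or `g * f ^ j` would come from a point
of too large transcendence degree, against the Fermat property. -/
lemma aeval_norm_oddSplitting_ne_zero {k R E Ξ Ω : Type u} [Field k] [CommRing R] [CommRing E]
    [Field Ξ] [Field Ω] [Algebra R E] [Algebra k Ξ] [Algebra R Ξ] [Algebra k Ω] [Algebra R Ω]
    [Algebra Ξ Ω] [IsScalarTower k Ξ Ω] [IsScalarTower R Ξ Ω] [Algebra.IsIntegral R E]
    (ε : E →ₐ[R] Ω) {K : DescentDatum R E} {p q n : ℕ} [NeZero p] [NeZero q] {x z : R}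
    (hx : ∀ r, IsAlgebraic k⟮algebraMap R Ω x⟯ (algebraMap R Ω r)) (hz : z ^ n = 1)
    (hz' : IsUnit (z - 1)) (L : KummerPair K p (x ^ n - 1) (x ^ n - z))
    (L' : KummerPair K q (x ^ n - 1) (x ^ n - z)) (H : FermatProperty k Ξ n {p, q})
    {y : OddSet p q → Ξ} {t : Ξ} {w : Option (OddSet p q) → Ξ} (hw : AlgebraicIndependent k w)
    (hwy : ∀ i, w i ∈ adjoin k (insert t (Set.range (MvPolynomial.aeval (R := R) y)))) :
    MvPolynomial.aeval y (oddSplitting L L').norm ≠ 0 := by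
  intro norm_eq_zero
  set g := oddSplitting L L'
  let yΩ : OddSet p q → Ω := algebraMap Ξ Ω ∘ y
  have wΩ_mem (i : Option (OddSet p q)) : algebraMap Ξ Ω (w i) ∈
      adjoin k (insert (algebraMap Ξ Ω t) (Set.range (MvPolynomial.aeval (R := R) yΩ))) :=
    algebraMap_mem_adjoin_insert_range_aeval (hwy i)
  obtain ⟨p₀, -, hp₀⟩ : ∃ p₀ ∈ Finset.univ, g.eval ε yΩ p₀ = 0 := by
    rw [← Finset.prod_eq_zero_iff, g.prod_eval ε yΩ]
    exact (MvPolynomial.aeval_algebraMap_apply Ω y g.norm).trans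
      ((congrArg _ norm_eq_zero).trans (map_zero _))
  have independent := g.algebraicIndependent_update_eval ε hx hp₀
    (hw.map' (f := IsScalarTower.toAlgHom k Ξ Ω) (algebraMap Ξ Ω).injective) wΩ_mem
  have eval_ne_zero (q) (hq : q ≠ p₀) : g.eval ε yΩ q ≠ 0 := by
    simpa [hq] using independent.ne_zero (some q)
  have x_transcendental : Transcendental k (algebraMap R Ω x) := by
    simpa using independent.transcendental (some p₀)
  obtain ⟨θ, hθ⟩ :=
    g.exists_algebraMap_eq_of_eval_eq_zero ε (σ_oddFunction L L') hp₀ eval_ne_zero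
  have θ_pow {e : ℕ} {r : R} (h : oddFunction L L' p₀ ^ e = algebraMap R E r) :
      θ ^ e = algebraMap R Ξ r := by
    apply (algebraMap Ξ Ω).injective
    rw [map_pow, hθ, ← map_pow, h, AlgHom.commutes, ← IsScalarTower.algebraMap_apply]
  have z_ne_one : algebraMap R Ξ z ≠ 1 := by
    have := (hz'.map (algebraMap R Ξ)).ne_zero
    rwa [map_sub, map_one, sub_ne_zero] at this
  refine x_transcendental ?_
  rw [IsScalarTower.algebraMap_apply R Ξ Ω]
  refine IsAlgebraic.algebraMap ?_
  obtain ⟨e, he, h | ⟨j, h⟩⟩ := oddFunction_pow L L' p₀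
  · refine H e he _ θ 1 0 (one_pow n) (fun _ ↦ rfl) ((θ_pow h).trans ?_)
    simp
  · refine H e he _ θ (algebraMap R Ξ z) j (by rw [← map_pow, hz, map_one])
      (fun h ↦ absurd h z_ne_one) ((θ_pow h).trans ?_)
    simp

end

/-! ### Hypersurfaces with isomorphic complements -/

section

open IntermediateField Polynomial KummerAlgebra

/-- The coordinate ring of the affine line without the zeros of `X ^ n - 1` and `X ^ n - z`. -/
abbrev PuncturedLine {F : Type u} [Field F] (n : ℕ) (z : F) : Type u :=
  Localization.Away ((X ^ n - 1) * (X ^ n - C z) : F[X])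

namespace PuncturedLine

variable {F : Type u} [Field F] {n : ℕ} {z : F}

variable (n z) in
/-- The coordinate of the punctured line. -/
def coord : PuncturedLine n z := algebraMap F[X] _ X

lemma punctures_ne_zero [NeZero n] : ((X ^ n - 1) * (X ^ n - C z) : F[X]) ≠ 0 :=
  mul_ne_zero (X_pow_sub_C_ne_zero (Nat.pos_of_neZero n) 1)
    (X_pow_sub_C_ne_zero (Nat.pos_of_neZero n) z)

instance [NeZero n] : IsDomain (PuncturedLine n z) :=
  IsLocalization.isDomain_localization
    (powers_le_nonZeroDivisors_of_noZeroDivisors punctures_ne_zero)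

lemma isUnit_coord_pow_sub : IsUnit (coord n z ^ n - 1) ∧
    IsUnit (coord n z ^ n - algebraMap F (PuncturedLine n z) z) := by
  have := IsLocalization.Away.algebraMap_isUnit (S := PuncturedLine n z)
    ((X ^ n - 1) * (X ^ n - C z) : F[X])
  rw [map_mul, IsUnit.mul_iff] at this
  simpa [coord, IsScalarTower.algebraMap_apply F F[X] (PuncturedLine n z)] using this

lemma exists_algHom_coord_eq [NeZero n] {Ξ : Type*} [Field Ξ] [Algebra F Ξ] {x : Ξ}
    (hx : Transcendental F x) : ∃ φ : PuncturedLine n z →ₐ[F] Ξ, φ (coord n z) = x := by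
  have isUnit_powers (w : Submonoid.powers ((X ^ n - 1) * (X ^ n - C z) : F[X])) :
      IsUnit (aeval x (w : F[X])) := by
    obtain ⟨_, m, rfl⟩ := w
    rw [map_pow]
    exact .pow m (isUnit_iff_ne_zero.mpr fun h ↦
      punctures_ne_zero (transcendental_iff.mp hx _ h))
  exact ⟨IsLocalization.liftAlgHom isUnit_powers, by simp [coord]⟩

lemma isAlgebraic_adjoin_coord {k Ω : Type*} [Field k] [Algebra k F] [Algebra.IsAlgebraic k F]
    [Field Ω] [Algebra k Ω] [Algebra (PuncturedLine n z) Ω] [IsScalarTower k (PuncturedLine n z) Ω]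
    (r : PuncturedLine n z) :
    IsAlgebraic k⟮algebraMap _ Ω (coord n z)⟯ (algebraMap _ Ω r) := by
  let A := algebraicClosure k⟮algebraMap _ Ω (coord n z)⟯ Ω
  have polynomial_mem (P : F[X]) : algebraMap (PuncturedLine n z) Ω (algebraMap F[X] _ P) ∈ A := by
    induction P using Polynomial.induction_on' with
    | add a b ha hb => simpa using add_mem ha hb
    | monomial m c =>
      rw [← C_mul_X_pow_eq_monomial, map_mul, map_mul, map_pow, map_pow]
      refine mul_mem ?_ (pow_mem ?_ m)
      · have := (Algebra.IsAlgebraic.isAlgebraic (R := k) c).algHom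
          ((IsScalarTower.toAlgHom k (PuncturedLine n z) Ω).comp
            (IsScalarTower.toAlgHom k F (PuncturedLine n z)))
        simpa [A, mem_algebraicClosure_iff, IsScalarTower.algebraMap_apply F F[X]]
          using this.tower_top k⟮algebraMap _ Ω (coord n z)⟯
      · exact mem_algebraicClosure_iff.mpr (isAlgebraic_algebraMap
          (⟨_, mem_adjoin_simple_self k _⟩ : k⟮algebraMap _ Ω (coord n z)⟯))
  obtain ⟨⟨P, Q⟩, hPQ⟩ :=
    IsLocalization.surj (Submonoid.powers ((X ^ n - 1) * (X ^ n - C z) : F[X])) r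
  have Q_ne_zero := ((IsLocalization.map_units (PuncturedLine n z) Q).map
    (algebraMap (PuncturedLine n z) Ω)).ne_zero
  have hPQ := congrArg (algebraMap (PuncturedLine n z) Ω) hPQ
  rw [map_mul] at hPQ
  rw [← mem_algebraicClosure_iff, eq_div_of_mul_eq Q_ne_zero hPQ]
  exact div_mem (polynomial_mem P) (polynomial_mem Q)

end PuncturedLine

/-- The cylinder over the zero locus of `a` has a point with coordinates in `Ξ` whose residue field
contains `N` algebraically independent elements. The point is given by a point `σ` of the zero locus
and by its coordinate `t` on the line. -/
def CylinderHasLargePoint (k : Type*) {S : Type*} [Field k] [CommRing S] [Algebra k S]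
    (Ξ : Type*) [Field Ξ] [Algebra k Ξ] (N : ℕ) (a : S) : Prop :=
  ∃ (σ : S →ₐ[k] Ξ) (t : Ξ) (v : Fin N → Ξ), σ a = 0 ∧ AlgebraicIndependent k v ∧
    ∀ i, v i ∈ adjoin k (insert t (Set.range σ))

lemma exists_aeval_norm_evenSplitting_eq_zero {R E Ξ : Type u} [CommRing R] [CommRing E]
    [Algebra R E] [CommRing Ξ] [Algebra R Ξ] {K : DescentDatum R E} {f g x : R} {p q : ℕ}
    [NeZero p] [NeZero q] (L : KummerPair K p f g) (L' : KummerPair K q f g)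
    {v : EvenSet p q → Ξ} (hv : v (fixedPoint p q) = algebraMap R Ξ x) :
    ∃ y : EvenSet p q → Ξ, MvPolynomial.aeval y (evenSplitting L L').norm = 0 ∧
      ∀ i, v i ∈ Set.range (MvPolynomial.aeval (R := R) y) := by
  refine ⟨Function.update v (fixedPoint p q) 0,
    aeval_norm_evenSplitting_eq_zero L L' _ (Function.update_self ..), fun i ↦ ?_⟩
  rcases eq_or_ne i (fixedPoint p q) with rfl | hi
  · exact ⟨MvPolynomial.C x, by simp [hv]⟩
  · exact ⟨MvPolynomial.X i, by simp [hi]⟩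

section NormHypersurfaces

variable {F : Type u} [Field F] {p q : ℕ} [Fact p.Prime] [Fact q.Prime] {z : F}
variable (hz : IsPrimitiveRoot z (p * q))

/-- The Kummer pair of `p`-th roots over the punctured line. -/
abbrev leftPair := BiKummerAlgebra.kummerPair (e := p) rfl
  (IsStrongPrimitiveRoot.of_isPrimitiveRoot (R := PuncturedLine (p * q) z) hz)
  PuncturedLine.isUnit_coord_pow_sub.1.unit PuncturedLine.isUnit_coord_pow_sub.2.unit

/-- The Kummer pair of `q`-th roots over the punctured line. -/
abbrev rightPair := BiKummerAlgebra.kummerPair (e := q) (mul_comm p q)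
  (IsStrongPrimitiveRoot.of_isPrimitiveRoot (R := PuncturedLine (p * q) z) hz)
  PuncturedLine.isUnit_coord_pow_sub.1.unit PuncturedLine.isUnit_coord_pow_sub.2.unit

/-- The equation of the norm hypersurface of `EvenSet p q`. -/
def evenNorm : MvPolynomial (EvenSet p q) (PuncturedLine (p * q) z) :=
  (evenSplitting (leftPair hz) (rightPair hz)).norm

/-- The equation of the norm hypersurface of `OddSet p q`. -/
def oddNorm : MvPolynomial (OddSet p q) (PuncturedLine (p * q) z) :=
  (oddSplitting (leftPair hz) (rightPair hz)).norm

variable {k Ξ : Type u} [Field k] [Algebra k F] [Field Ξ] [Algebra k Ξ]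

lemma cylinderHasLargePoint_evenNorm [Algebra F Ξ] [IsScalarTower k F Ξ]
    {v : Option (EvenSet p q) → Ξ}
    (hv : AlgebraicIndependent F v) :
    CylinderHasLargePoint k Ξ (Nat.card (Option (EvenSet p q))) (evenNorm hz) := by
  obtain ⟨φ, hφ⟩ := PuncturedLine.exists_algHom_coord_eq (n := p * q) (z := z)
    (hv.transcendental (some (fixedPoint p q)))
  let : Algebra (PuncturedLine (p * q) z) Ξ := φ.toAlgebra
  have : IsScalarTower k (PuncturedLine (p * q) z) Ξ := .of_algHom (φ.restrictScalars k)
  obtain ⟨y, norm_eq_zero, hy⟩ := exists_aeval_norm_evenSplitting_eq_zero (leftPair hz)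
    (rightPair hz) (v := v ∘ some) hφ.symm
  refine ⟨(MvPolynomial.aeval y).restrictScalars k, v none, v ∘ (Finite.equivFin _).symm,
    norm_eq_zero, (hv.restrictScalars (algebraMap k F).injective).comp _ (Equiv.injective _),
    fun i ↦ subset_adjoin _ _ ?_⟩
  rw [Function.comp_apply]
  rcases (Finite.equivFin _).symm i with _ | j
  · exact Set.mem_insert _ _
  · exact Set.mem_insert_of_mem _ (hy j)

lemma not_cylinderHasLargePoint_oddNorm [Algebra.IsAlgebraic k F]
    (H : FermatProperty k Ξ (p * q) {p, q}) :
    ¬ CylinderHasLargePoint k Ξ (Nat.card (Option (OddSet p q))) (oddNorm hz) := by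
  rintro ⟨σ, t, v, norm_eq_zero, hv, v_mem⟩
  let S := PuncturedLine (p * q) z
  let : Algebra S Ξ := (σ.toRingHom.comp MvPolynomial.C).toAlgebra
  have : IsScalarTower k S Ξ := .of_algHom (σ.comp (IsScalarTower.toAlgHom k S _))
  let Ω := AlgebraicClosure Ξ
  have : IsScalarTower k S Ω := .of_algebraMap_eq fun c ↦ by
    rw [IsScalarTower.algebraMap_apply k Ξ Ω, IsScalarTower.algebraMap_apply S Ξ Ω,
      ← IsScalarTower.algebraMap_apply k S Ξ]
  have σ_eq (a) : σ a = MvPolynomial.aeval (R := S) (σ ∘ MvPolynomial.X) a := by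
    refine DFunLike.congr_fun (f := σ.toRingHom)
      (g := (MvPolynomial.aeval (R := S) (σ ∘ MvPolynomial.X)).toRingHom) ?_ a
    refine MvPolynomial.ringHom_ext (fun r ↦ ?_) fun j ↦ ?_
    · exact (MvPolynomial.aeval_C (R := S) _ r).symm
    · exact (MvPolynomial.aeval_X (R := S) (σ ∘ MvPolynomial.X) j).symm
  have hz' := IsStrongPrimitiveRoot.of_isPrimitiveRoot (R := S) hz
  have isUnit_z_sub_one : IsUnit (algebraMap F S z - 1) := by
    simpa using hz'.isUnit_pow_sub_one 1 one_ne_zero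
      (Nat.mul_le_mul (Fact.out : p.Prime).two_le (Fact.out : q.Prime).one_le)
  let f : S := PuncturedLine.coord (p * q) z ^ (p * q) - 1
  let g : S := PuncturedLine.coord (p * q) z ^ (p * q) - algebraMap F S z
  have : Module.Finite S (BiKummerAlgebra S (p * q) f g) :=
    .of_basis ((basis (p * q) f).tensorProduct (basis (p * q) g))
  obtain ⟨ε⟩ := BiKummerAlgebra.nonempty_algHom (n := p * q) f g Ω
  refine aeval_norm_oddSplitting_ne_zero ε (t := t) PuncturedLine.isAlgebraic_adjoin_coord
    hz'.pow_eq_one isUnit_z_sub_one (leftPair hz) (rightPair hz) H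
    (hv.comp (Finite.equivFin _) (Equiv.injective _)) (fun i ↦ ?_)
    ((σ_eq _).symm.trans norm_eq_zero)
  rw [← (funext σ_eq :)]
  exact v_mem _

end NormHypersurfaces

lemma CylinderHasLargePoint.map {k S S' Ξ : Type*} [Field k] [CommRing S] [CommRing S']
    [Algebra k S] [Algebra k S'] [Field Ξ] [Algebra k Ξ] {N : ℕ} {a : S}
    (h : CylinderHasLargePoint k Ξ N a) (e : S ≃ₐ[k] S') :
    CylinderHasLargePoint k Ξ N (e a) := by
  obtain ⟨σ, t, v, ha, hv, v_mem⟩ := h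
  refine ⟨σ.comp e.symm, t, v, by simpa using ha, hv, fun i ↦ ?_⟩
  have range_eq : Set.range (σ.comp (e.symm : S' →ₐ[k] S)) = Set.range σ :=
    e.symm.surjective.range_comp σ
  exact range_eq ▸ v_mem i

lemma nonempty_away_algEquiv {k S S' : Type*} [CommRing k] [CommRing S] [CommRing S']
    [Algebra k S] [Algebra k S'] (e : S ≃ₐ[k] S') (a : S) :
    Nonempty (Localization.Away (e a) ≃ₐ[k] Localization.Away a) :=
  ⟨(IsLocalization.algEquivOfAlgEquiv (M := Submonoid.powers a) (T := Submonoid.powers (e a))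
    _ _ e (Submonoid.map_powers e a)).symm⟩

lemma exists_primes (k : Type*) [Field k] (d : ℕ) :
    ∃ p q : ℕ, p.Prime ∧ q.Prime ∧ d < p ∧ 3 ≤ p ∧ p < q ∧ ((p * q : ℕ) : k) ≠ 0 := by
  have cast_ne_zero {p : ℕ} (hp : p.Prime) (hlt : ringChar k < p) : (p : k) ≠ 0 := fun h ↦
    CharP.ringChar_ne_one (((Nat.dvd_prime hp).mp (ringChar.dvd h)).resolve_right hlt.ne)
  obtain ⟨p, hp_le, hp⟩ := Nat.exists_infinite_primes (d + ringChar k + 3)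
  obtain ⟨q, hq_le, hq⟩ := Nat.exists_infinite_primes (p + 1)
  refine ⟨p, q, hp, hq, by lia, by lia, hq_le, ?_⟩
  rw [Nat.cast_mul]
  exact mul_ne_zero (cast_ne_zero hp (by lia)) (cast_ne_zero hq (by lia))

lemma dvd_mul_and_mul_add_le {p q : ℕ} (hp : 3 ≤ p) (hq : 3 ≤ q) :
    ∀ e ∈ ({p, q} : Set ℕ), e ∣ p * q ∧ p * q + 2 * e ≤ e * (p * q) := by
  rintro e (rfl | rfl)
  · have : q + 2 ≤ e * q := by nlinarith
    exact ⟨dvd_mul_right e q, by nlinarith [Nat.mul_le_mul_left e this]⟩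
  · have : p + 2 ≤ p * e := by nlinarith
    exact ⟨dvd_mul_left e p, by nlinarith [Nat.mul_le_mul_left e this]⟩

lemma FermatProperty.of_isAlgebraic {k F Ξ : Type u} [Field k] [Field F] [Field Ξ] [Algebra k F]
    [Algebra F Ξ] [Algebra k Ξ] [IsScalarTower k F Ξ] [Algebra.IsAlgebraic k F] {n : ℕ}
    {T : Set ℕ} (H : FermatProperty F Ξ n T) : FermatProperty k Ξ n T :=
  fun e he x θ l j hl hlj h ↦ (H e he x θ l j hl hlj h).restrictScalars k

theorem exists_hypersurfaces (k : Type u) [Field k] (d : ℕ) :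
    ∃ (S Ξ : Type u) (_ : CommRing S) (_ : Field Ξ) (_ : Algebra k S) (_ : Algebra k Ξ)
      (a b : S) (N : ℕ), IsDomain S ∧ Algebra.FiniteType k S ∧ d < N ∧
      Nonempty (Localization.Away a ≃ₐ[k] Localization.Away b) ∧
      CylinderHasLargePoint k Ξ N a ∧ ¬ CylinderHasLargePoint k Ξ N b := by
  obtain ⟨p, q, hp, hq, hdp, three_le_p, hpq, hpqk⟩ := exists_primes k d
  have : Fact p.Prime := ⟨hp⟩
  have : Fact q.Prime := ⟨hq⟩
  have : NeZero ((p * q : ℕ) : k) := ⟨hpqk⟩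
  let F := CyclotomicField (p * q) k
  have : FiniteDimensional k F := IsCyclotomicExtension.finiteDimensional {p * q} k F
  have hz := IsCyclotomicExtension.zeta_spec (p * q) k F
  have hpqF : ((p * q : ℕ) : F) ≠ 0 := by
    rw [← map_natCast (algebraMap k F)]
    exact (_root_.map_ne_zero _).mpr hpqk
  obtain ⟨Ξ, _, _, v, hv, H⟩ := exists_fermatProperty hpqF
    (dvd_mul_and_mul_add_le three_le_p (by lia)) (Nat.card (Option (EvenSet p q)))
  let : Algebra k Ξ := ((algebraMap F Ξ).comp (algebraMap k F)).toAlgebra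
  have : IsScalarTower k F Ξ := .of_algebraMap_eq fun _ ↦ rfl
  let R := PuncturedLine (p * q) (IsCyclotomicExtension.zeta (p * q) k F)
  have : Algebra.FiniteType k R := .trans (S := F) inferInstance inferInstance
  let e := (MvPolynomial.renameEquiv R (Fintype.equivOfCardEq (card_evenSet p q))).restrictScalars k
  obtain ⟨awayEquiv⟩ := nonempty_torusRing_algEquiv_evenSplitting_oddSplitting hpq.ne
    (leftPair hz) (rightPair hz)
  obtain ⟨awayEquiv'⟩ := nonempty_away_algEquiv e (evenNorm hz)
  refine ⟨MvPolynomial (OddSet p q) R, Ξ, inferInstance, inferInstance, inferInstance,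
    inferInstance, e (evenNorm hz), oddNorm hz, Nat.card (Option (EvenSet p q)), inferInstance,
    .trans (S := R) inferInstance inferInstance, ?_,
    ⟨awayEquiv'.trans (awayEquiv.restrictScalars k)⟩, ?_, ?_⟩
  · have := le_card_evenSet p q
    rw [Nat.card_eq_fintype_card, Fintype.card_option]
    lia
  · refine (cylinderHasLargePoint_evenNorm hz (v := v ∘ Finite.equivFin _) ?_).map e
    exact hv.comp _ (Equiv.injective _)
  · rw [Nat.card_eq_fintype_card, Fintype.card_option, card_evenSet, ← Fintype.card_option,
      ← Nat.card_eq_fintype_card]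
    exact not_cylinderHasLargePoint_oddNorm hz H.of_isAlgebraic

end

/-! ### Classes of varieties and of their cylinders -/

section Varieties

variable {k : Type u} [Field k] {X Y Z U : Variety k}

instance (V : Variety k) : IsReduced V.toScheme := V.reduced
instance (V : Variety k) : IsSeparated V.str := V.separated
instance (V : Variety k) : LocallyOfFiniteType V.str := V.locallyOfFiniteType
instance (V : Variety k) : QuasiCompact V.str := V.quasiCompact

/-- `X` and `Y` are isomorphic as varieties over `k`. -/
def Isomorphic (X Y : Variety k) : Prop :=
  ∃ e : X.toScheme ≅ Y.toScheme, e.hom ≫ Y.str = X.str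

/-- `X` is cut into a closed subvariety `Y` and its open complement `U`. -/
def IsCut (X Y U : Variety k) : Prop :=
  ∃ (i : Y.toScheme ⟶ X.toScheme) (j : U.toScheme ⟶ X.toScheme),
    IsClosedImmersion i ∧ IsOpenImmersion j ∧ i ≫ X.str = Y.str ∧ j ≫ X.str = U.str ∧
      Set.range j = (Set.range i)ᶜ

lemma Isomorphic.symm : Isomorphic X Y → Isomorphic Y X
  | ⟨e, he⟩ => ⟨e.symm, by rw [← he, Iso.symm_hom, e.inv_hom_id_assoc]⟩

lemma Isomorphic.trans : Isomorphic X Y → Isomorphic Y Z → Isomorphic X Z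
  | ⟨e, he⟩, ⟨f, hf⟩ => ⟨e ≪≫ f, by rw [Iso.trans_hom, Category.assoc, hf, he]⟩

lemma Isomorphic.cls_eq (h : Isomorphic X Y) : K0Var.cls X = K0Var.cls Y :=
  QuotientAddGroup.eq_iff_sub_mem.mpr <|
    AddSubgroup.subset_closure <| .inl ⟨⟨X, trivial⟩, ⟨Y, trivial⟩, h, rfl⟩

lemma IsCut.cls_eq (h : IsCut X Y U) : K0Var.cls X = K0Var.cls Y + K0Var.cls U := by
  obtain ⟨i, j, hi, hj, hiX, hjX, hrange⟩ := h
  refine QuotientAddGroup.eq_iff_sub_mem.mpr <| AddSubgroup.subset_closure <|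
    .inr ⟨⟨X, trivial⟩, ⟨Y, trivial⟩, ⟨U, trivial⟩, i, j, hi, hj, hiX, hjX, hrange, ?_⟩
  rw [sub_sub]

/-- The cylinder `V × 𝔸¹` over a variety `V`. -/
abbrev cylinder (V : Variety k) : Variety k where
  toScheme := 𝔸(PUnit; V.toScheme)
  str := (𝔸(PUnit; V.toScheme) ↘ V.toScheme) ≫ V.str
  reduced := inferInstance
  separated := inferInstance
  locallyOfFiniteType := inferInstance
  quasiCompact := inferInstance

lemma isomorphic_cylinder (h : Isomorphic X Y) : Isomorphic (cylinder X) (cylinder Y) := by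
  obtain ⟨e, he⟩ := h
  have : IsIso (AffineSpace.map PUnit e.hom) :=
    MorphismProperty.of_isPullback (P := .isomorphisms Scheme)
      (AffineSpace.isPullback_map e.hom).flip (inferInstanceAs (IsIso e.hom))
  refine ⟨asIso (AffineSpace.map PUnit e.hom), ?_⟩
  simp only [cylinder, asIso_hom, AffineSpace.map_over_assoc, he]

lemma range_of_isPullback {P X Y Z : Scheme.{u}} {fst : P ⟶ X} {snd : P ⟶ Y} {f : X ⟶ Z}
    {g : Y ⟶ Z} (h : IsPullback fst snd f g) : Set.range fst = f ⁻¹' Set.range g := by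
  rw [← Scheme.Pullback.range_fst, ← h.isoPullback_hom_fst, Scheme.Hom.comp_base,
    TopCat.coe_comp, Function.Surjective.range_comp h.isoPullback.hom.surjective]

lemma isCut_cylinder (h : IsCut X Y U) :
    IsCut (cylinder X) (cylinder Y) (cylinder U) := by
  obtain ⟨i, j, hi, hj, hiX, hjX, hrange⟩ := h
  refine ⟨AffineSpace.map PUnit i, AffineSpace.map PUnit j, ?_, ?_, ?_, ?_, ?_⟩
  · exact MorphismProperty.of_isPullback (AffineSpace.isPullback_map i).flip hi
  · exact MorphismProperty.of_isPullback (AffineSpace.isPullback_map j).flip hj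
  · simp only [cylinder, AffineSpace.map_over_assoc, hiX]
  · simp only [cylinder, AffineSpace.map_over_assoc, hjX]
  · rw [range_of_isPullback (AffineSpace.isPullback_map i),
      range_of_isPullback (AffineSpace.isPullback_map j), hrange, Set.preimage_compl]

/-- The pair `([V], [V × 𝔸¹])`, additive in `V` just as `[V]` is. -/
def classPair (V : Variety k) : K0Var k × K0Var k :=
  (K0Var.cls V, K0Var.cls (cylinder V))

lemma Isomorphic.classPair_eq (h : Isomorphic X Y) : classPair X = classPair Y :=
  Prod.ext h.cls_eq (isomorphic_cylinder h).cls_eq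

lemma IsCut.classPair_eq (h : IsCut X Y U) : classPair X = classPair Y + classPair U :=
  Prod.ext h.cls_eq (isCut_cylinder h).cls_eq

lemma isReduced_coprod (X Y : Scheme.{u}) [IsReduced X] [IsReduced Y] : IsReduced (X ⨿ Y) := by
  have : ∀ i, AlgebraicGeometry.IsReduced ((coprodOpenCover.{_, 0} X Y).X i) := by
    rintro (_ | _) <;> dsimp only [coprodOpenCover, Sum.elim_inl, Sum.elim_inr] <;> infer_instance
  exact .of_openCover _ (coprodOpenCover.{_, 0} X Y)

lemma locallyOfFiniteType_coprodDesc {X Y Z : Scheme.{u}} (f : X ⟶ Z) (g : Y ⟶ Z)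
    [LocallyOfFiniteType f] [LocallyOfFiniteType g] : LocallyOfFiniteType (coprod.desc f g) := by
  have := HasRingHomProperty.instIsZariskiLocalAtSource (P := @LocallyOfFiniteType)
  refine IsZariskiLocalAtSource.of_openCover (P := @LocallyOfFiniteType)
    (coprodOpenCover.{_, 0} X Y) ?_
  rintro (_ | _)
  · exact (coprod.inl_desc f g).symm ▸ ‹_›
  · exact (coprod.inr_desc f g).symm ▸ ‹_›

lemma isSeparated_coprodDesc {X Y Z : Scheme.{u}} (f : X ⟶ Z) (g : Y ⟶ Z)
    [IsSeparated f] [IsSeparated g] : IsSeparated (coprod.desc f g) := by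
  have : IsSeparated (coprod.map f g) := IsZariskiLocalAtTarget.coprodMap f g ‹_› ‹_›
  rw [show coprod.desc f g = coprod.map f g ≫ coprod.desc (𝟙 Z) (𝟙 Z) by simp]
  infer_instance

instance (V : Variety k) : CompactSpace V.toScheme :=
  (quasiCompact_iff_compactSpace (f := V.str)).mp V.quasiCompact

/-- The disjoint union of two varieties. -/
abbrev disjointUnion (X Y : Variety k) : Variety k where
  toScheme := X.toScheme ⨿ Y.toScheme
  str := coprod.desc X.str Y.str
  reduced := isReduced_coprod _ _
  separated := isSeparated_coprodDesc _ _
  locallyOfFiniteType := locallyOfFiniteType_coprodDesc _ _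
  quasiCompact :=
    have : CompactSpace ↑(X.toScheme ⨿ Y.toScheme) := (coprodMk _ _).compactSpace
    inferInstance

lemma isCut_disjointUnion (X Y : Variety k) : IsCut (disjointUnion X Y) X Y := by
  have hcompl := isCompl_range_inl_inr X.toScheme Y.toScheme
  refine ⟨coprod.inl, coprod.inr, ?_, inferInstance, ?_, ?_, hcompl.compl_eq.symm⟩
  · refine .of_isPreimmersion _ ?_
    rw [← hcompl.symm.compl_eq]
    exact (coprod.inr : Y.toScheme ⟶ _).isOpenEmbedding.isOpen_range.isClosed_compl
  · exact coprod.inl_desc _ _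
  · exact coprod.inr_desc _ _

lemma classPair_disjointUnion (X Y : Variety k) :
    classPair (disjointUnion X Y) = classPair X + classPair Y :=
  (isCut_disjointUnion X Y).classPair_eq

end Varieties

section AffineVarieties

variable (k : Type u) [Field k] (B : Type u) [CommRing B] [Algebra k B]

/-- The affine variety with coordinate ring `B`. -/
abbrev affineVariety [_root_.IsReduced B] [Algebra.FiniteType k B] : Variety k where
  toScheme := Spec (.of B)
  str := Spec.map (CommRingCat.ofHom (algebraMap k B))
  reduced := by
    have : _root_.IsReduced (CommRingCat.of B) := ‹_›
    infer_instance
  separated := inferInstance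
  locallyOfFiniteType := by
    rw [HasRingHomProperty.Spec_iff (P := @LocallyOfFiniteType)]
    exact RingHom.finiteType_algebraMap.mpr ‹_›
  quasiCompact := inferInstance

instance (n : B) : _root_.IsReduced (B ⧸ (Ideal.span {n}).radical) :=
  (Ideal.isRadical_iff_quotient_reduced _).mp (Ideal.radical_isRadical _)

instance [_root_.IsReduced B] (n : B) : _root_.IsReduced (Localization.Away n) :=
  isReduced_localizationPreserves (Submonoid.powers n) _ ‹_›

instance [Algebra.FiniteType k B] (n : B) : Algebra.FiniteType k (Localization.Away n) :=
  .trans (S := B) ‹_› (IsLocalization.finiteType_of_monoid_fg (Submonoid.powers n) _)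

/-- The hypersurface `a = 0` in the affine variety with coordinate ring `B`, with its reduced
structure. -/
abbrev hypersurface {B : Type u} [CommRing B] [Algebra k B] [Algebra.FiniteType k B] (a : B) :
    Variety k :=
  affineVariety k (B ⧸ (Ideal.span {a}).radical)

variable {k B} [_root_.IsReduced B] [Algebra.FiniteType k B]

lemma isomorphic_affineVariety {C : Type u} [CommRing C] [Algebra k C] [_root_.IsReduced C]
    [Algebra.FiniteType k C] (e : B ≃ₐ[k] C) :
    Isomorphic (affineVariety k B) (affineVariety k C) := by
  refine ⟨asIso (Spec.map e.symm.toRingEquiv.toCommRingCatIso.hom), ?_⟩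
  change Spec.map _ ≫ Spec.map _ = Spec.map _
  rw [← Spec.map_comp]
  congr 1
  ext c : 2
  exact e.symm.commutes c

lemma isCut_affineVariety (n : B) :
    IsCut (affineVariety k B) (hypersurface k n) (affineVariety k (Localization.Away n)) := by
  refine ⟨Spec.map (CommRingCat.ofHom (Ideal.Quotient.mk _)),
    Spec.map (CommRingCat.ofHom (algebraMap B (Localization.Away n))), ?_, ?_, ?_, ?_, ?_⟩
  · exact .spec_of_surjective _ Ideal.Quotient.mk_surjective
  · exact .of_isLocalization n
  · change Spec.map _ ≫ Spec.map _ = Spec.map _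
    rw [← Spec.map_comp]
    rfl
  · change Spec.map _ ≫ Spec.map _ = Spec.map _
    rw [← Spec.map_comp, ← CommRingCat.ofHom_comp, ← IsScalarTower.algebraMap_eq]
  · change Set.range (PrimeSpectrum.comap _) = (Set.range (PrimeSpectrum.comap _))ᶜ
    refine (PrimeSpectrum.localization_away_comap_range _ n).trans <| Eq.trans ?_ <|
      congrArg _ (range_comap_of_surjective _ _ Ideal.Quotient.mk_surjective).symm
    rw [Ideal.mk_ker,
      PrimeSpectrum.zeroLocus_radical, PrimeSpectrum.zeroLocus_span,
      PrimeSpectrum.basicOpen_eq_zeroLocus_compl]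

lemma classPair_hypersurface_eq {a b : B}
    (e : Localization.Away a ≃ₐ[k] Localization.Away b) :
    classPair (hypersurface k a) = classPair (hypersurface k b) := by
  have ha := (isCut_affineVariety (k := k) a).classPair_eq
  rw [(isomorphic_affineVariety e).classPair_eq, (isCut_affineVariety b).classPair_eq] at ha
  exact (add_right_cancel ha).symm

lemma isomorphic_cylinder_affineVariety :
    Isomorphic (cylinder (affineVariety k B)) (affineVariety k (MvPolynomial PUnit.{u + 1} B)) := by
  refine ⟨AffineSpace.SpecIso PUnit (.of B), ?_⟩
  rw [← Iso.eq_inv_comp, AffineSpace.SpecIso_inv_over_assoc, ← Spec.map_comp]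
  rfl

end AffineVarieties

section Lefschetz

variable {k : Type u} [Field k]

variable (k) in
/-- The affine line, as a variety. -/
abbrev affineLine : Variety k := affineVariety k (Polynomial k)

lemma isAffLine_affineLine : IsAffLine (affineLine k) :=
  ⟨Iso.refl _, by simp [affineLine, affineVariety]⟩

/-- Both sides arise from `𝔸(PUnit; Spec k)` by base change along the structure morphism. -/
lemma exists_pullback_iso_cylinder {A : Variety k} (hA : IsAffLine A) (Z : Variety k) :
    ∃ e : pullback Z.str A.str ≅ (cylinder Z).toScheme,
      e.hom ≫ (cylinder Z).str = pullback.fst _ _ ≫ Z.str := by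
  let φ : CommRingCat.of (MvPolynomial PUnit.{u + 1} k) ≅ CommRingCat.of (Polynomial k) :=
    (MvPolynomial.uniqueAlgEquiv k PUnit).toRingEquiv.toCommRingCatIso
  obtain ⟨a, ha⟩ := hA
  let e : A.toScheme ≅ 𝔸(PUnit; Spec (CommRingCat.of k)) :=
    a ≪≫ asIso (Spec.map φ.hom) ≪≫ (AffineSpace.SpecIso PUnit (.of k)).symm
  have he : e.hom ≫ (𝔸(PUnit; Spec (CommRingCat.of k)) ↘ Spec (CommRingCat.of k)) = A.str := by
    rw [← ha, Iso.trans_hom, Iso.trans_hom, Iso.symm_hom, Category.assoc, Category.assoc,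
      AffineSpace.SpecIso_inv_over, asIso_hom, ← Spec.map_comp]
    congr 2
    ext x : 2
    exact (MvPolynomial.uniqueAlgEquiv k PUnit).commutes x
  have hpb := (AffineSpace.isPullback_map Z.str (n := PUnit)).flip
  refine ⟨asIso (pullback.map Z.str A.str Z.str _ (𝟙 _) e.hom (𝟙 _) (by simp) (by simp [he])) ≪≫
    hpb.isoPullback.symm, ?_⟩
  rw [Iso.trans_hom, Iso.symm_hom, Category.assoc, hpb.isoPullback_inv_fst_assoc]
  exact (pullback.lift_fst_assoc _ _ _ _).trans (by rw [Category.comp_id])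

lemma isProductOf_iff_isomorphic_cylinder {W Z A : Variety k} (hA : IsAffLine A) :
    IsProductOf W Z A ↔ Isomorphic W (cylinder Z) := by
  obtain ⟨a, ha⟩ := exists_pullback_iso_cylinder hA Z
  constructor
  · rintro ⟨e, he⟩
    exact ⟨e ≪≫ a, by rw [Iso.trans_hom, Category.assoc, ha, he]⟩
  · rintro ⟨e, he⟩
    exact ⟨e ≪≫ a.symm, by rw [Iso.trans_hom, Category.assoc, Iso.symm_hom, ← ha,
      Iso.inv_hom_id_assoc, he]⟩

lemma isProductOf_cylinder (V : Variety k) : IsProductOf (cylinder V) V (affineLine k) :=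
  (isProductOf_iff_isomorphic_cylinder isAffLine_affineLine).mpr ⟨Iso.refl _, Category.id_comp _⟩

/-- Every element of the subgroup generated by the `classPair V` is a difference of two of them,
since these are closed under addition. -/
lemma exists_eq_classPair_sub_classPair {p : K0Var k × K0Var k}
    (hp : p ∈ AddSubgroup.closure (Set.range (classPair (k := k)))) :
    ∃ X Y : Variety k, p = classPair X - classPair Y := by
  induction hp using AddSubgroup.closure_induction with
  | mem _ h =>
    obtain ⟨V, rfl⟩ := h
    exact ⟨disjointUnion V V, V, by rw [classPair_disjointUnion, add_sub_cancel_right]⟩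
  | zero => exact ⟨affineLine k, affineLine k, (sub_self _).symm⟩
  | add _ _ _ _ hp hq =>
    obtain ⟨X, Y, rfl⟩ := hp
    obtain ⟨X', Y', rfl⟩ := hq
    exact ⟨disjointUnion X X', disjointUnion Y Y', by
      rw [classPair_disjointUnion, classPair_disjointUnion, add_sub_add_comm]⟩
  | neg _ _ hp =>
    obtain ⟨X, Y, rfl⟩ := hp
    exact ⟨Y, X, neg_sub _ _⟩

lemma exists_classPair_sub_classPair_eq_of_mulLZero {χ : K0Var k} (hχ : MulLZero χ) :
    ∃ X Y : Variety k, (χ, 0) = classPair X - classPair Y := by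
  obtain ⟨m, c, Z, W, hW, hχ, hzero⟩ := hχ
  have hcls (i : Fin m) : K0Var.cls (W i) = K0Var.cls (cylinder (Z i)) := by
    obtain ⟨A, hA, hWA⟩ := hW i
    exact ((isProductOf_iff_isomorphic_cylinder hA).mp hWA).cls_eq
  have hsum : ((χ, 0) : K0Var k × K0Var k) = ∑ i, c i • classPair (Z i) := by
    refine Prod.ext (hχ.trans ?_) (hzero.trans ?_)
    · exact (Prod.fst_sum (f := fun i ↦ c i • classPair (Z i))).symm
    rw [Prod.snd_sum]
    exact Finset.sum_congr rfl fun i _ ↦ congrArg (c i • ·) (hcls i)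
  apply exists_eq_classPair_sub_classPair
  rw [hsum]
  exact sum_mem fun i _ ↦ zsmul_mem (AddSubgroup.subset_closure (Set.mem_range_self (Z i))) _

end Lefschetz

/-! ### Large points -/

section LargePoints

variable {k Ξ : Type u} [Field k] [Field Ξ] [Algebra k Ξ] {N : ℕ} {X Y : Scheme.{u}}
  {s : X ⟶ Spec (.of k)} {t : Y ⟶ Spec (.of k)}

variable (Ξ N s) in
/-- The residue field of `x` embeds over `k` into `Ξ` with `N` algebraically independent elements
of `Ξ` in its image. -/
def IsLargeAt (x : X) : Prop :=
  ∃ ψ : X.residueField x ⟶ CommRingCat.of Ξ,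
    Spec.map ψ ≫ X.fromSpecResidueField x ≫ s = Spec.map (CommRingCat.ofHom (algebraMap k Ξ)) ∧
      ∃ v : Fin N → Ξ, AlgebraicIndependent k v ∧ ∀ i, v i ∈ ψ.hom.fieldRange

variable (Ξ N s) in
/-- The `k`-scheme `s : X ⟶ Spec k` has a point that is large in `Ξ`. -/
def HasLargePoint : Prop := ∃ x, IsLargeAt Ξ N s x

lemma isIso_residueFieldMap (f : X ⟶ Y) [IsPreimmersion f] (x : X) :
    IsIso (f.residueFieldMap x) := by
  have surjective : Function.Surjective (f.stalkMap x ≫ X.residue x).hom := by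
    rw [CommRingCat.hom_comp]
    exact (X.residue_surjective x).comp (f.stalkMap_surjective x)
  rw [← Scheme.residue_residueFieldMap, CommRingCat.hom_comp] at surjective
  exact (RingEquiv.ofBijective (f.residueFieldMap x).hom ⟨RingHom.injective _,
    surjective.of_comp (g := (Y.residue (f x)).hom)⟩).toCommRingCatIso.isIso_hom

lemma isLargeAt_iff_of_isPreimmersion (f : X ⟶ Y) [IsPreimmersion f] (hf : f ≫ t = s) (x : X) :
    IsLargeAt Ξ N s x ↔ IsLargeAt Ξ N t (f x) := by
  have := isIso_residueFieldMap f x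
  constructor
  · rintro ⟨ψ, hψ, v, hv, hmem⟩
    refine ⟨f.residueFieldMap x ≫ ψ, ?_, v, hv, fun i ↦ ?_⟩
    · rw [Spec.map_comp, Category.assoc,
        Scheme.Hom.SpecMap_residueFieldMap_fromSpecResidueField_assoc, hf, hψ]
    · obtain ⟨y, hy⟩ := hmem i
      refine ⟨(inv (f.residueFieldMap x)).hom y, ?_⟩
      rw [← hy, ← RingHom.comp_apply, ← CommRingCat.hom_comp, IsIso.inv_hom_id_assoc]
  · rintro ⟨ψ, hψ, v, hv, hmem⟩
    refine ⟨inv (f.residueFieldMap x) ≫ ψ, ?_, v, hv, fun i ↦ ?_⟩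
    · rw [← hf, ← Scheme.Hom.SpecMap_residueFieldMap_fromSpecResidueField_assoc,
        ← Spec.map_comp_assoc, IsIso.hom_inv_id_assoc, hψ]
    · obtain ⟨y, hy⟩ := hmem i
      refine ⟨(f.residueFieldMap x).hom y, ?_⟩
      rw [← hy, ← RingHom.comp_apply, ← CommRingCat.hom_comp, IsIso.hom_inv_id_assoc]

lemma HasLargePoint.of_isPreimmersion (h : HasLargePoint Ξ N s) (f : X ⟶ Y) [IsPreimmersion f]
    (hf : f ≫ t = s) : HasLargePoint Ξ N t :=
  h.imp' f fun x ↦ (isLargeAt_iff_of_isPreimmersion f hf x).mp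

section Varieties

variable {V W U : Variety k}

lemma Isomorphic.hasLargePoint_iff (h : Isomorphic V W) :
    HasLargePoint Ξ N V.str ↔ HasLargePoint Ξ N W.str := by
  obtain ⟨e, he⟩ := h
  exact ⟨fun hV ↦ hV.of_isPreimmersion e.hom he,
    fun hW ↦ hW.of_isPreimmersion e.inv (by rw [← he, e.inv_hom_id_assoc])⟩

lemma IsCut.hasLargePoint_iff (h : IsCut V W U) :
    HasLargePoint Ξ N V.str ↔ HasLargePoint Ξ N W.str ∨ HasLargePoint Ξ N U.str := by
  obtain ⟨i, j, hi, hj, hiV, hjV, hrange⟩ := h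
  constructor
  · rintro ⟨x, hx⟩
    by_cases hxi : x ∈ Set.range i
    · obtain ⟨y, rfl⟩ := hxi
      exact .inl ⟨y, (isLargeAt_iff_of_isPreimmersion i hiV y).mpr hx⟩
    · obtain ⟨y, rfl⟩ : x ∈ Set.range j := hrange ▸ hxi
      exact .inr ⟨y, (isLargeAt_iff_of_isPreimmersion j hjV y).mpr hx⟩
  · rintro (hW | hU)
    · exact hW.of_isPreimmersion i hiV
    · exact hU.of_isPreimmersion j hjV

lemma HasLargePoint.of_piecewiseIso (hV : HasLargePoint Ξ N V.str) (h : PiecewiseIso V W) :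
    HasLargePoint Ξ N W.str := by
  obtain ⟨m, P, Q, f, g, hf, hg, hfV, hgW, -, -, hcover, -, he⟩ := h
  obtain ⟨x, hx⟩ := hV
  obtain ⟨i, y, rfl⟩ := Set.mem_iUnion.mp (hcover.symm ▸ Set.mem_univ x)
  have := (hf i).toIsPreimmersion
  have := (hg i).toIsPreimmersion
  have hP : HasLargePoint Ξ N (P i).str :=
    ⟨y, (isLargeAt_iff_of_isPreimmersion (f i) (hfV i) y).mpr hx⟩
  exact ((Isomorphic.hasLargePoint_iff (he i)).mp hP).of_isPreimmersion (g i) (hgW i)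

end Varieties

section Affine

variable {B : Type u} [CommRing B] [Algebra k B]

lemma fieldRange_eq_adjoin_range {x : Spec (.of B)}
    {ψ : (Spec (.of B)).residueField x ⟶ CommRingCat.of Ξ} {ρ : B →ₐ[k] Ξ}
    (h : Spec.map ψ ≫ (Spec (.of B)).fromSpecResidueField x =
      Spec.map (CommRingCat.ofHom ρ.toRingHom)) :
    (ψ.hom.fieldRange : Set Ξ) = IntermediateField.adjoin k (Set.range ρ) := by
  have : x.asIdeal.IsPrime := PrimeSpectrum.isPrime x
  let e := Scheme.Spec.residueFieldIso (.of B) x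
  let τ : x.asIdeal.ResidueField →+* Ξ := (e.inv ≫ ψ).hom
  have range_τ : Set.range τ = Set.range ψ.hom :=
    e.symm.commRingCatIsoToRingEquiv.surjective.range_comp ψ.hom
  rw [← Scheme.Spec.map_residueFieldIso_inv_eq_fromSpecResidueField, ← Spec.map_comp,
    ← Spec.map_comp] at h
  have hτ : τ.comp (algebraMap B _) = ρ.toRingHom :=
    congrArg CommRingCat.Hom.hom (Spec.map_injective h)
  have range_quotient : Set.range (τ.comp (algebraMap (B ⧸ x.asIdeal) _)) = Set.range ρ :=
    (Ideal.Quotient.mk_surjective.range_comp _).symm.trans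
      (congrArg (fun f : B →+* Ξ ↦ Set.range f) hτ)
  have range_algebraMap : Set.range (algebraMap k Ξ) ⊆ Set.range ρ :=
    Set.range_subset_iff.mpr fun c ↦ ⟨algebraMap k B c, ρ.commutes c⟩
  calc (ψ.hom.fieldRange : Set Ξ) = τ.fieldRange := range_τ.symm
    _ = Subfield.closure (Set.range ρ) := by
      rw [IsFractionRing.ringHom_fieldRange_eq_of_comp_eq (A := B ⧸ x.asIdeal) rfl,
        RingHom.coe_range, range_quotient]
    _ = (IntermediateField.adjoin k (Set.range ρ)).toSubfield := by
      rw [IntermediateField.adjoin_toSubfield, Set.union_eq_self_of_subset_left range_algebraMap]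

lemma hasLargePoint_spec_iff :
    HasLargePoint Ξ N (Spec.map (CommRingCat.ofHom (algebraMap k B))) ↔
      ∃ (ρ : B →ₐ[k] Ξ) (v : Fin N → Ξ), AlgebraicIndependent k v ∧
        ∀ i, v i ∈ IntermediateField.adjoin k (Set.range ρ) := by
  constructor
  · rintro ⟨x, ψ, hψ, v, hv, hmem⟩
    obtain ⟨ρ, hρ⟩ := Spec.map_surjective (Spec.map ψ ≫ (Spec (.of B)).fromSpecResidueField x)
    rw [← Category.assoc, ← hρ, ← Spec.map_comp] at hψ
    let ρ' : B →ₐ[k] Ξ :=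
      { ρ.hom with commutes' := fun c ↦ congr($(Spec.map_injective hψ) c) }
    refine ⟨ρ', v, hv, fun i ↦ ?_⟩
    exact (fieldRange_eq_adjoin_range (ρ := ρ') hρ.symm).subset (hmem i)
  · rintro ⟨ρ, v, hv, hmem⟩
    let g : Spec (.of Ξ) ⟶ Spec (.of B) := Spec.map (CommRingCat.ofHom ρ.toRingHom)
    have hg := Scheme.descResidueField_stalkClosedPointTo_fromSpecResidueField Ξ _ g
    refine ⟨_, _, ?_, v, hv, fun i ↦ (fieldRange_eq_adjoin_range hg).superset (hmem i)⟩
    rw [reassoc_of% hg, ← Spec.map_comp, ← CommRingCat.ofHom_comp]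
    exact congr(Spec.map (CommRingCat.ofHom $(ρ.comp_algebraMap)))

lemma adjoin_range_mvPolynomial (ρ : MvPolynomial PUnit.{u + 1} B →ₐ[k] Ξ) :
    IntermediateField.adjoin k (Set.range ρ) = IntermediateField.adjoin k
      (insert (ρ (.X .unit)) (Set.range (ρ.comp (IsScalarTower.toAlgHom k B _)))) := by
  apply le_antisymm
  · rw [IntermediateField.adjoin_le_iff]
    rintro _ ⟨p, rfl⟩
    induction p using MvPolynomial.induction_on with
    | C b => exact IntermediateField.subset_adjoin _ _ (Set.mem_insert_of_mem _ ⟨b, rfl⟩)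
    | add p q hp hq => exact map_add ρ p q ▸ add_mem hp hq
    | mul_X p _ hp =>
      exact map_mul ρ p _ ▸ mul_mem hp (IntermediateField.subset_adjoin _ _ (Set.mem_insert _ _))
  · refine IntermediateField.adjoin.mono _ _ _ (Set.insert_subset ⟨_, rfl⟩ ?_)
    rintro _ ⟨b, rfl⟩
    exact ⟨_, rfl⟩

variable [Algebra.FiniteType k B]

lemma hasLargePoint_cylinder_hypersurface_iff {a : B} :
    HasLargePoint Ξ N (cylinder (hypersurface k a)).str ↔ CylinderHasLargePoint k Ξ N a := by
  rw [isomorphic_cylinder_affineVariety.hasLargePoint_iff, hasLargePoint_spec_iff]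
  constructor
  · rintro ⟨ρ, v, hv, hmem⟩
    let σ := ρ.comp (IsScalarTower.toAlgHom k (B ⧸ (Ideal.span {a}).radical) _)
    let π := Ideal.Quotient.mkₐ k (Ideal.span {a}).radical
    have π_a : π a = 0 := Ideal.Quotient.eq_zero_iff_mem.mpr
      (Ideal.le_radical (Ideal.mem_span_singleton_self a))
    refine ⟨σ.comp π, ρ (.X .unit), v, ?_, hv, ?_⟩
    · rw [AlgHom.comp_apply, π_a, map_zero]
    · have range_eq : Set.range (σ.comp π) = Set.range σ :=
        (Ideal.Quotient.mkₐ_surjective k _).range_comp σ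
      rwa [range_eq, ← adjoin_range_mvPolynomial]
  · rintro ⟨σ, t, v, σ_a, hv, hmem⟩
    have radical_le : (Ideal.span {a}).radical ≤ RingHom.ker σ :=
      (RingHom.ker_isPrime σ).isRadical.radical_le_iff.mpr
        ((Ideal.span_singleton_le_iff_mem _).mpr σ_a)
    let ρ := MvPolynomial.aevalTower (Ideal.Quotient.liftₐ _ σ radical_le) fun _ : PUnit ↦ t
    refine ⟨ρ, v, hv, fun i ↦ IntermediateField.adjoin.mono _ _ _ ?_ (hmem i)⟩
    rintro _ (rfl | ⟨b, rfl⟩)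
    · exact ⟨.X .unit, MvPolynomial.aevalTower_X _ _ _⟩
    · exact ⟨.C (Ideal.Quotient.mk _ b), MvPolynomial.aevalTower_C _ _ _⟩

variable (k B) in
lemma exists_forall_hasLargePoint_spec_le :
    ∃ d : ℕ, ∀ (Ξ : Type u) [Field Ξ] [Algebra k Ξ] (N : ℕ),
      HasLargePoint Ξ N (Spec.map (CommRingCat.ofHom (algebraMap k B))) → N ≤ d := by
  obtain ⟨G, hG⟩ := Algebra.FiniteType.out (R := k) (A := B)
  refine ⟨G.card, fun Ξ _ _ N h ↦ ?_⟩
  obtain ⟨ρ, v, hv, hmem⟩ := hasLargePoint_spec_iff.mp h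
  have range_ρ : Set.range ρ = Algebra.adjoin k (ρ '' G) := by
    rw [← AlgHom.map_adjoin, hG, Algebra.map_top, AlgHom.coe_range]
  have adjoin_le : IntermediateField.adjoin k (Set.range ρ) ≤
      IntermediateField.adjoin k (ρ '' G) := by
    rw [IntermediateField.adjoin_le_iff, range_ρ]
    exact IntermediateField.algebra_adjoin_le_adjoin k _
  have le_card : ENat.card (Fin N) ≤ G.card :=
    calc ENat.card (Fin N) ≤ (AlgebraicIndependent.matroid k Ξ).eRk (ρ '' G) :=
        card_le_eRk_of_isAlgebraic_adjoin hv fun i ↦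
          isAlgebraic_algebraMap (⟨v i, adjoin_le (hmem i)⟩ : IntermediateField.adjoin k _)
      _ ≤ (ρ '' G).encard := Matroid.eRk_le_encard _ _
      _ ≤ G.card := (Set.encard_image_le _ _).trans (Set.encard_coe_eq_coe_finsetCard G).le
  rw [ENat.card_eq_coe_natCard, Nat.card_fin] at le_card
  exact_mod_cast le_card

lemma exists_forall_hasLargePoint_le_of_isAffine [IsAffine X] [LocallyOfFiniteType s] :
    ∃ d : ℕ, ∀ (Ξ : Type u) [Field Ξ] [Algebra k Ξ] (N : ℕ), HasLargePoint Ξ N s → N ≤ d := by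
  obtain ⟨φ, hφ⟩ := Spec.map_surjective (X.isoSpec.inv ≫ s)
  let _ : Algebra k Γ(X, ⊤) := φ.hom.toAlgebra
  have : Algebra.FiniteType k Γ(X, ⊤) := by
    have : LocallyOfFiniteType (Spec.map φ) := hφ ▸ inferInstance
    exact (HasRingHomProperty.Spec_iff (P := @LocallyOfFiniteType)).mp this
  obtain ⟨d, hd⟩ := exists_forall_hasLargePoint_spec_le k Γ(X, ⊤)
  refine ⟨d, fun Ξ _ _ N h ↦ hd Ξ N (h.of_isPreimmersion X.isoSpec.hom ?_)⟩
  exact (congrArg (X.isoSpec.hom ≫ ·) hφ).trans (X.isoSpec.hom_inv_id_assoc s)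

lemma exists_forall_hasLargePoint_le (V : Variety k) :
    ∃ d : ℕ, ∀ (Ξ : Type u) [Field Ξ] [Algebra k Ξ] (N : ℕ),
      HasLargePoint Ξ N V.str → N ≤ d := by
  let 𝒰 := V.toScheme.affineCover.finiteSubcover
  have (i : 𝒰.I₀) : IsAffine (𝒰.X i) := inferInstanceAs (IsAffine (Spec _))
  choose d hd using fun i : 𝒰.I₀ ↦ exists_forall_hasLargePoint_le_of_isAffine (s := 𝒰.f i ≫ V.str)
  refine ⟨Finset.univ.sup d, fun Ξ _ _ N ⟨x, hx⟩ ↦ ?_⟩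
  obtain ⟨i, y, rfl⟩ := 𝒰.exists_eq x
  exact (hd i Ξ N ⟨y, (isLargeAt_iff_of_isPreimmersion (𝒰.f i) rfl y).mpr hx⟩).trans
    (Finset.le_sup (Finset.mem_univ i))

end Affine

end LargePoints

end LefschetzKernel

theorem kernel_of_L_representation_general (k : Type u) [Field k] (χ : K0Var k)
    (hLχ : MulLZero χ) :
    ∃ (X Y A XA YA : Variety k),
      IsAffLine A ∧ IsProductOf XA X A ∧ IsProductOf YA Y A ∧
      χ = K0Var.cls X - K0Var.cls Y ∧
      K0Var.cls XA = K0Var.cls YA ∧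
      ¬ PiecewiseIso XA YA := by
  open LefschetzKernel in
  obtain ⟨X, Y, hχ⟩ := exists_classPair_sub_classPair_eq_of_mulLZero hLχ
  obtain ⟨d, hd⟩ := exists_forall_hasLargePoint_le (cylinder Y)
  obtain ⟨S, Ξ, _, _, _, _, a, b, N, _, _, d_lt, ⟨e⟩, large_a, not_large_b⟩ :=
    exists_hypersurfaces k d
  let X' := disjointUnion X (hypersurface k a)
  let Y' := disjointUnion Y (hypersurface k b)
  have hχ' : (χ, 0) = classPair X' - classPair Y' := by
    rw [classPair_disjointUnion, classPair_disjointUnion, classPair_hypersurface_eq e, hχ,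
      add_sub_add_right_eq_sub]
  refine ⟨X', Y', affineLine k, cylinder X', cylinder Y', isAffLine_affineLine,
    isProductOf_cylinder X', isProductOf_cylinder Y', congrArg Prod.fst hχ',
    sub_eq_zero.mp (congrArg Prod.snd hχ').symm, fun hXY ↦ ?_⟩
  have large_X' : HasLargePoint Ξ N (cylinder X').str :=
    (isCut_cylinder (isCut_disjointUnion X _)).hasLargePoint_iff.mpr
      (.inr (hasLargePoint_cylinder_hypersurface_iff.mpr large_a))
  rcases (isCut_cylinder (isCut_disjointUnion Y _)).hasLargePoint_iff.mp
    (large_X'.of_piecewiseIso hXY) with large_Y | large_b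
  · exact d_lt.not_ge (hd Ξ N large_Y)
  · exact not_large_b (hasLargePoint_cylinder_hypersurface_iff.mp large_b)


/-- Over a convenient field, any nonzero `χ` in the kernel of
multiplication by `L` can be written as `χ = [X] - [Y]` where
`[X × 𝔸¹] = [Y × 𝔸¹]` but `X × 𝔸¹` and `Y × 𝔸¹` are not piecewise isomorphic. -/
theorem kernel_of_L_representation (k : Type u) [Field k] (hk : ConvenientField k)
    (χ : K0Var k) (hχ : χ ≠ 0) (hLχ : MulLZero χ) :
    ∃ (X Y A XA YA : Variety k),
      IsAffLine A ∧ IsProductOf XA X A ∧ IsProductOf YA Y A ∧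
      χ = K0Var.cls X - K0Var.cls Y ∧
      K0Var.cls XA = K0Var.cls YA ∧
      ¬ PiecewiseIso XA YA :=
  kernel_of_L_representation_general k χ hLχ
end
end

section
/- Let φ: X ⇢ Y be a birational isomorphism between smooth projective varieties of dimension n over a field k, represented by an isomorphism U → V of dense open subvarieties. Let U' ⊆ U be a dense open subvariety and V' = φ(U'), so that φ is also represented by the restricted isomorphism U' → V'. If [X∖U] − [Y∖V] lies in the image of multiplication by L : K_0(V_k^{(n−2)}) → K_0(V_k^{(n−1)}), then so does [X∖U'] − [Y∖V']. In particular, whether φ is convenient does not depend on the chosen representation. -/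
open AlgebraicGeometry CategoryTheory CategoryTheory.Limits

noncomputable section

universe u

open Variety

/-!
The closed subvariety `X ∖ U` of `X ∖ U'` has open complement `U ∖ U'`, so that
`[X ∖ U'] = [X ∖ U] + [U ∖ U']`, and likewise `[Y ∖ V'] = [Y ∖ V] + [V ∖ V']`. Reduced closed
subschemes are determined by their underlying sets, so `φ` restricts to an isomorphism
`U ∖ U' ≅ V ∖ V'`. Since all these varieties embed into `X ∖ U'` or `Y ∖ V'`, the bound on
dimensions is respected and `[X ∖ U'] - [Y ∖ V'] = [X ∖ U] - [Y ∖ V]` in the same group.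
-/

section ClosedSubschemes

variable {X Z T : Scheme.{u}}

lemma exists_comp_eq_of_isClosedImmersion_of_range_subset (i : Z ⟶ X) [IsClosedImmersion i]
    (f : T ⟶ X) [IsReduced T] (hf : Set.range f ⊆ Set.range i) : ∃ g : T ⟶ Z, g ≫ i = f := by
  have : Surjective (pullback.snd i f) := by
    rwa [surjective_iff, ← Set.range_eq_univ, Scheme.Pullback.range_snd, Set.preimage_eq_univ_iff]
  have := isIso_of_isClosedImmersion_of_surjective (pullback.snd i f)
  exact ⟨inv (pullback.snd i f) ≫ pullback.fst i f, by simp [pullback.condition]⟩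

lemma exists_iso_of_isClosedImmersion_of_range_eq (i : Z ⟶ X) (j : T ⟶ X)
    [IsClosedImmersion i] [IsClosedImmersion j] [IsReduced Z] [IsReduced T]
    (h : Set.range i = Set.range j) : ∃ g : Z ≅ T, g.hom ≫ j = i := by
  obtain ⟨a, ha⟩ := exists_comp_eq_of_isClosedImmersion_of_range_subset j i h.le
  obtain ⟨b, hb⟩ := exists_comp_eq_of_isClosedImmersion_of_range_subset i j h.ge
  exact ⟨⟨a, b, by simp [← cancel_mono i, ha, hb], by simp [← cancel_mono j, ha, hb]⟩, ha⟩

lemma isReduced_subscheme_of_isRadical (I : X.IdealSheafData)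
    (hI : ∀ V : X.affineOpens, (I.ideal V).IsRadical) : IsReduced I.subscheme := by
  have (V : I.subschemeCover.openCover.I₀) : IsReduced (I.subschemeCover.openCover.X V) := by
    change X.affineOpens at V
    have : _root_.IsReduced (Γ(X, V) ⧸ I.ideal V) :=
      (Ideal.isRadical_iff_quotient_reduced _).1 (hI V)
    exact inferInstanceAs (IsReduced (Spec (.of (Γ(X, V) ⧸ I.ideal V))))
  exact IsReduced.of_openCover _ I.subschemeCover.openCover

lemma isReduced_subscheme_vanishingIdeal (C : TopologicalSpace.Closeds X) :
    IsReduced (Scheme.IdealSheafData.vanishingIdeal C).subscheme :=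
  isReduced_subscheme_of_isRadical _ fun _ ↦ PrimeSpectrum.isRadical_vanishingIdeal _

lemma range_morphismRestrict (f : Z ⟶ X) (U : X.Opens) :
    Set.range (f ∣_ U) = U.ι ⁻¹' Set.range f := by
  rw [morphismRestrict_base]
  exact Set.range_restrictPreimage _ _

end ClosedSubschemes

namespace Variety

variable {k : Type u} [Field k]

lemma isNoetherian_toScheme (X : Variety k) : IsNoetherian X.toScheme :=
  have := X.locallyOfFiniteType
  have := X.quasiCompact
  { __ := LocallyOfFiniteType.isLocallyNoetherian X.str
    __ := QuasiCompact.compactSpace_of_compactSpace X.str }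

/-- An open subset `U` of `X` as a variety over `k`, so that differences such as `U ∖ U'`, open in
`X ∖ U'`, have classes in Grothendieck groups. -/
def openSubvariety (X : Variety k) (U : X.toScheme.Opens) : Variety k where
  toScheme := U.toScheme
  str := U.ι ≫ X.str
  reduced := have := X.reduced; inferInstance
  separated := have := X.separated; inferInstance
  locallyOfFiniteType := have := X.locallyOfFiniteType; inferInstance
  quasiCompact :=
    have := X.quasiCompact
    have := X.isNoetherian_toScheme
    inferInstance

lemma dim_le_of_isPreimmersion {X Y : Variety k} (f : X.toScheme ⟶ Y.toScheme)
    [IsPreimmersion f] : X.dim ≤ Y.dim :=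
  f.isEmbedding.isInducing.topologicalKrullDim_le

lemma dim_openSubvariety_le (X : Variety k) (U : X.toScheme.Opens) :
    (X.openSubvariety U).dim ≤ X.dim :=
  U.ι.isOpenEmbedding.isInducing.topologicalKrullDim_le

lemma exists_isComplementOf (X : Variety k) (U : X.toScheme.Opens) :
    ∃ Z : Variety k, IsComplementOf Z X U := by
  let I := Scheme.IdealSheafData.vanishingIdeal U.compl
  have := X.separated
  have := X.locallyOfFiniteType
  have := X.quasiCompact
  exact ⟨⟨I.subscheme, I.subschemeι ≫ X.str, isReduced_subscheme_vanishingIdeal _, inferInstance,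
    inferInstance, inferInstance⟩, I.subschemeι, inferInstance, rfl,
    I.range_subschemeι.trans (by simp [I])⟩

namespace IsComplementOf

variable {X Y Z W : Variety k} {U U' : X.toScheme.Opens}

lemma dim_le (hZ : IsComplementOf Z X U) : Z.dim ≤ X.dim := by
  obtain ⟨i, _, -, -⟩ := hZ
  exact dim_le_of_isPreimmersion i

lemma exists_iso (hZ : IsComplementOf Z X U) (hW : IsComplementOf W X U) :
    ∃ g : Z.toScheme ≅ W.toScheme, g.hom ≫ W.str = Z.str := by
  obtain ⟨i, _, hi, hiU⟩ := hZ
  obtain ⟨j, _, hj, hjU⟩ := hW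
  have := Z.reduced
  have := W.reduced
  obtain ⟨g, hg⟩ := exists_iso_of_isClosedImmersion_of_range_eq i j (hiU.trans hjU.symm)
  exact ⟨g, by rw [← hj, reassoc_of% hg, hi]⟩

lemma of_iso {V : Y.toScheme.Opens} (e : X.toScheme ≅ Y.toScheme) (he : e.hom ≫ Y.str = X.str)
    (heU : e.hom ⁻¹ᵁ V = U) (hZ : IsComplementOf Z X U) : IsComplementOf Z Y V := by
  subst heU
  obtain ⟨i, _, hi, hiV⟩ := hZ
  refine ⟨i ≫ e.hom, inferInstance, by rw [Category.assoc, he, hi], ?_⟩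
  calc Set.range (i ≫ e.hom) = e.hom '' Set.range i := by simp [Set.range_comp]
    _ = e.hom '' (e.hom ⁻¹' (V : Set Y.toScheme)ᶜ) := congrArg _ hiV
    _ = (V : Set Y.toScheme)ᶜ := Set.image_preimage_eq _ e.hom.surjective

lemma exists_isComplementOf_openSubvariety (hZ : IsComplementOf Z X U)
    (hW : IsComplementOf W X U') (hle : U' ≤ U) :
    ∃ D : W.toScheme.Opens, IsComplementOf Z W D ∧
      IsComplementOf (W.openSubvariety D) (X.openSubvariety U) (U.ι ⁻¹ᵁ U') := by
  obtain ⟨i, _, hi, hiU⟩ := hZ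
  obtain ⟨j, _, hj, hjU'⟩ := hW
  have := Z.reduced
  obtain ⟨g, rfl⟩ := exists_comp_eq_of_isClosedImmersion_of_range_subset j i
    (hiU.trans_subset <| (Set.compl_subset_compl.2 hle).trans_eq hjU'.symm)
  refine ⟨j ⁻¹ᵁ U, ⟨g, .of_comp_isClosedImmersion g j, by rw [← hj, ← hi, Category.assoc], ?_⟩,
    ⟨j ∣_ U, inferInstanceAs (IsClosedImmersion (j ∣_ U)), ?_, ?_⟩⟩
  · calc Set.range g = j ⁻¹' (j '' Set.range g) :=
          (Set.preimage_image_eq _ j.isClosedEmbedding.injective).symm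
      _ = j ⁻¹' Set.range (g ≫ j) := by simp [Set.range_comp]
      _ = j ⁻¹' (U : Set X.toScheme)ᶜ := congrArg _ hiU
  · exact (morphismRestrict_ι_assoc j U X.str).trans (congrArg _ hj)
  · exact (range_morphismRestrict j U).trans (congrArg _ hjU')

lemma dim_le_of_le (hZ : IsComplementOf Z X U) (hW : IsComplementOf W X U') (hle : U' ≤ U) :
    Z.dim ≤ W.dim := by
  obtain ⟨D, hD, -⟩ := hZ.exists_isComplementOf_openSubvariety hW hle
  exact hD.dim_le

end IsComplementOf

section GrothendieckGroup

variable {X Y : Variety k}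

lemma K0.cls_eq_of_iso {P : Variety k → Prop} (hX : P X) (hY : P Y)
    (e : X.toScheme ≅ Y.toScheme) (he : e.hom ≫ Y.str = X.str) : K0.cls X hX = K0.cls Y hY :=
  QuotientAddGroup.eq_iff_sub_mem.2 <| AddSubgroup.subset_closure <| .inl ⟨_, _, ⟨e, he⟩, rfl⟩

lemma K0.cls_eq_add_of_isComplementOf {P : Variety k → Prop} {Z : Variety k}
    {U : X.toScheme.Opens} (hX : P X) (hZ : P Z) (hU : P (X.openSubvariety U))
    (h : IsComplementOf Z X U) : K0.cls X hX = K0.cls Z hZ + K0.cls (X.openSubvariety U) hU := by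
  obtain ⟨i, hi, hiX, hiU⟩ := h
  refine (QuotientAddGroup.eq_iff_sub_mem (N := AddSubgroup.closure (cutRel P))).2
    (AddSubgroup.subset_closure <| .inr ⟨⟨X, hX⟩, ⟨Z, hZ⟩, ⟨_, hU⟩, i, U.ι, hi,
      inferInstanceAs (IsOpenImmersion U.ι), hiX, rfl, ?_, (sub_sub _ _ _).symm⟩)
  rw [hiU, compl_compl]
  exact U.range_ι

variable {d : WithBot ℕ∞} {ZX ZX' ZY ZY' : Variety k} {U U' : X.toScheme.Opens}
  {V V' : Y.toScheme.Opens}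

lemma K0.cls_complement_sub_eq_of_iso (e : U.toScheme ≅ V.toScheme)
    (he : e.hom ≫ V.ι ≫ Y.str = U.ι ≫ X.str) (hU' : U' ≤ U) (hV' : V' ≤ V)
    (heU : e.hom ⁻¹ᵁ V.ι ⁻¹ᵁ V' = U.ι ⁻¹ᵁ U')
    (hZX : IsComplementOf ZX X U) (hZY : IsComplementOf ZY Y V)
    (hZX' : IsComplementOf ZX' X U') (hZY' : IsComplementOf ZY' Y V')
    (hdX : ZX.dim ≤ d) (hdY : ZY.dim ≤ d) (hdX' : ZX'.dim ≤ d) (hdY' : ZY'.dim ≤ d) :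
    (K0.cls ZX' hdX' - K0.cls ZY' hdY' : K0 k (·.dim ≤ d)) = K0.cls ZX hdX - K0.cls ZY hdY := by
  obtain ⟨D, hZD, hD⟩ := hZX.exists_isComplementOf_openSubvariety hZX' hU'
  obtain ⟨E, hZE, hE⟩ := hZY.exists_isComplementOf_openSubvariety hZY' hV'
  have hDY : IsComplementOf (ZX'.openSubvariety D) (Y.openSubvariety V) (V.ι ⁻¹ᵁ V') :=
    hD.of_iso e he heU
  obtain ⟨g, hg⟩ := hDY.exists_iso hE
  have hdD : (ZX'.openSubvariety D).dim ≤ d := (dim_openSubvariety_le _ _).trans hdX'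
  have hdE : (ZY'.openSubvariety E).dim ≤ d := (dim_openSubvariety_le _ _).trans hdY'
  rw [K0.cls_eq_add_of_isComplementOf _ hdX hdD hZD, K0.cls_eq_add_of_isComplementOf _ hdY hdE hZE,
    K0.cls_eq_of_iso hdD hdE g hg, add_sub_add_right_eq_sub]

end GrothendieckGroup

end Variety

theorem convenientRep_restrict_general {k : Type u} [Field k] (n : ℕ) {X Y : Variety k}
    {U U' : X.toScheme.Opens} {V V' : Y.toScheme.Opens}
    (e : U.toScheme ≅ V.toScheme) (he : e.hom ≫ V.ι ≫ Y.str = U.ι ≫ X.str) (hU' : U' ≤ U)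
    (hV' : (V' : Set Y.toScheme) = V.ι '' (e.hom '' (U.ι ⁻¹' (U' : Set X.toScheme))))
    (h : ConvenientRep n X Y U V) : ConvenientRep n X Y U' V' := by
  have hle : V' ≤ V := by
    rw [← SetLike.coe_subset_coe, hV', ← V.range_ι]
    exact Set.image_subset_range _ _
  have hpre : e.hom ⁻¹ᵁ V.ι ⁻¹ᵁ V' = U.ι ⁻¹ᵁ U' := by
    apply TopologicalSpace.Opens.ext
    change e.hom ⁻¹' (V.ι ⁻¹' (V' : Set Y.toScheme)) = U.ι ⁻¹' (U' : Set X.toScheme)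
    rw [hV', Set.preimage_image_eq _ V.ι.injective, Set.preimage_image_eq _ e.hom.injective]
  intro ZX' ZY' hdX' hdY' hZX' hZY'
  obtain ⟨ZX, hZX⟩ := X.exists_isComplementOf U
  obtain ⟨ZY, hZY⟩ := Y.exists_isComplementOf V
  have hdX := (hZX.dim_le_of_le hZX' hU').trans hdX'
  have hdY := (hZY.dim_le_of_le hZY' hle).trans hdY'
  rw [K0.cls_complement_sub_eq_of_iso e he hU' hle hpre hZX hZY hZX' hZY' hdX hdY]
  exact h ZX ZY hdX hdY hZX hZY

/-- Convenience of a birational isomorphism does not depend on the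
chosen representation: if `φ : X ⇢ Y` is represented by an isomorphism `e : U ≅ V` of
dense open subvarieties and also by its restriction `U' → V' = φ(U')` to a dense open
`U' ⊆ U`, and `[X ∖ U] - [Y ∖ V]` lies in the image of
`·L : K_0(V_k^{(n-2)}) → K_0(V_k^{(n-1)})`, then so does `[X ∖ U'] - [Y ∖ V']`. -/
theorem convenientRep_restrict (k : Type u) [Field k] (n : ℕ) (X Y : Variety k)
    (hXs : IsSmoothVar X) (hYs : IsSmoothVar Y)
    (hXp : IsProjectiveVar X) (hYp : IsProjectiveVar Y)
    (hXi : IrreducibleSpace X.toScheme) (hYi : IrreducibleSpace Y.toScheme)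
    (hXd : X.dim = (n : WithBot ℕ∞)) (hYd : Y.dim = (n : WithBot ℕ∞))
    (U : X.toScheme.Opens) (V : Y.toScheme.Opens)
    (hU : Dense (U : Set X.toScheme)) (hV : Dense (V : Set Y.toScheme))
    (e : U.toScheme ≅ V.toScheme) (he : e.hom ≫ V.ι ≫ Y.str = U.ι ≫ X.str)
    (U' : X.toScheme.Opens) (hU'le : U' ≤ U) (hU' : Dense (U' : Set X.toScheme))
    (V' : Y.toScheme.Opens)
    (hV' : (V' : Set Y.toScheme) =
      V.ι.base '' (e.hom.base '' (U.ι.base ⁻¹' (U' : Set X.toScheme))))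
    (h : ConvenientRep n X Y U V) :
    ConvenientRep n X Y U' V' :=
  convenientRep_restrict_general n e he hU'le hV' h
end
end
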